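/- arXiv:1509.05905 — 3 statements merged into one kernel-verified Lean document; each statement's English description precedes it below -/
import Mathlib

section
/- Let U ⊆ ℝ² be a nonempty connected open set and let f : U → ℝ be a function such that for every irreducible polynomial P ∈ ℝ[x,y] and every smooth algebraic arc A of the plane curve P = 0 with A ⊆ U, the restriction f|_A is regular. Then there exist real polynomials p, q ∈ ℝ[x,y], with q not the zero polynomial, such that f(x) = p(x)/q(x) for every x ∈ U with q(x) ≠ 0. (Theorem 2.4 for domains in the plane, stated without the codimension-two claim on the polar set.) -/
open MvPolynomial

/-- The real zero set of a polynomial in two variables. -/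
def realZeroSet (P : MvPolynomial (Fin 2) ℝ) : Set (Fin 2 → ℝ) :=
  {v | eval v P = 0}

/-- `A` is a smooth algebraic arc of the plane curve `P = 0`: it consists of smooth real
points of the curve, is open in the subspace topology of the real zero set of `P`, and
is homeomorphic to `ℝ`. -/
def IsSmoothAlgebraicArc (P : MvPolynomial (Fin 2) ℝ) (A : Set (Fin 2 → ℝ)) : Prop :=
  (∀ v ∈ A, eval v P = 0 ∧
    (eval v (pderiv 0 P) ≠ 0 ∨ eval v (pderiv 1 P) ≠ 0)) ∧
  (∃ O : Set (Fin 2 → ℝ), IsOpen O ∧ A = O ∩ realZeroSet P) ∧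
  Nonempty (A ≃ₜ ℝ)


/-- The affine linear polynomial of the line through `c` with direction `d`. -/
noncomputable def linePoly (c d : Fin 2 → ℝ) : MvPolynomial (Fin 2) ℝ :=
  C (d 1) * (X 0 - C (c 0)) - C (d 0) * (X 1 - C (c 1))

lemma linePoly_eval (c d v : Fin 2 → ℝ) :
    eval v (linePoly c d) = d 1 * (v 0 - c 0) - d 0 * (v 1 - c 1) := by
  simp [linePoly]

lemma dir_sq_pos {d : Fin 2 → ℝ} (hd : d ≠ 0) : 0 < d 0 ^ 2 + d 1 ^ 2 := by
  by_contra h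
  apply hd
  have h0 : d 0 = 0 := by nlinarith [sq_nonneg (d 0), sq_nonneg (d 1)]
  have h1 : d 1 = 0 := by nlinarith [sq_nonneg (d 0), sq_nonneg (d 1)]
  ext i
  fin_cases i <;> simp [h0, h1]

lemma linePoly_irreducible (c d : Fin 2 → ℝ) (hd : d ≠ 0) : Irreducible (linePoly c d) := by
  have hpos := dir_sq_pos hd
  have hnc : ∀ a : ℝ, linePoly c d ≠ C a := by
    intro a h
    have h1 := congrArg (eval c) h
    have h2 := congrArg (eval ![c 0 + d 1, c 1 - d 0]) h
    rw [linePoly_eval] at h1 h2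
    simp at h1 h2
    nlinarith
  apply irreducible_of_totalDegree_eq_one
  · apply le_antisymm
    · have hX : ∀ (i : Fin 2) (a b : ℝ), (C b * (X i - C a) : MvPolynomial (Fin 2) ℝ).totalDegree ≤ 1 := by
        intro i a b
        refine (totalDegree_mul _ _).trans ?_
        rw [totalDegree_C, zero_add]
        refine (totalDegree_sub _ _).trans ?_
        simp
      exact (totalDegree_sub _ _).trans (max_le (hX _ _ _) (hX _ _ _))
    · by_contra h
      have h0 : (linePoly c d).totalDegree = 0 := by omega
      rw [totalDegree_eq_zero_iff_eq_C] at h0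
      exact hnc _ h0
  · intro x hx
    rw [isUnit_iff_ne_zero]
    rintro rfl
    apply hnc 0
    ext i
    simpa using hx i

lemma line_arc (c d : Fin 2 → ℝ) (hd : d ≠ 0) :
    IsSmoothAlgebraicArc (linePoly c d) ((fun t : ℝ => c + t • d) '' Metric.ball 0 1) := by
  have hpos := dir_sq_pos hd
  set inv : (Fin 2 → ℝ) → ℝ :=
    fun w => (d 0 * (w 0 - c 0) + d 1 * (w 1 - c 1)) / (d 0 ^ 2 + d 1 ^ 2) with hinv
  have hinvc : Continuous inv := by
    rw [hinv]; fun_prop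
  have hleft : ∀ t : ℝ, inv (c + t • d) = t := by
    intro t
    simp only [hinv, Pi.add_apply, Pi.smul_apply, smul_eq_mul]
    field_simp
    ring
  refine ⟨?_, ⟨inv ⁻¹' Metric.ball 0 1, Metric.isOpen_ball.preimage hinvc, ?_⟩, ?_⟩
  · rintro _ ⟨t, -, rfl⟩
    refine ⟨?_, ?_⟩
    · rw [linePoly_eval]
      simp
      ring
    · by_contra h
      push Not at h
      obtain ⟨h0, h1⟩ := h
      simp [linePoly, pderiv_X] at h0 h1
      rw [h0, h1] at hpos
      simp at hpos
  · ext w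
    constructor
    · rintro ⟨t, ht, rfl⟩
      refine ⟨?_, ?_⟩
      · show inv (c + t • d) ∈ Metric.ball (0:ℝ) 1
        rwa [hleft]
      · show eval _ _ = 0
        rw [linePoly_eval]
        simp
        ring
    · rintro ⟨h1, h2⟩
      refine ⟨inv w, h1, ?_⟩
      have h2 : eval w (linePoly c d) = 0 := h2
      rw [linePoly_eval] at h2
      ext i
      fin_cases i
      · simp [hinv]
        field_simp
        linear_combination (-d 1) * h2
      · simp [hinv]
        field_simp
        linear_combination (d 0) * h2
  · have hemb : Topology.IsEmbedding (fun t : ℝ => c + t • d) :=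
      Function.LeftInverse.isEmbedding hleft hinvc (by fun_prop)
    exact ⟨((hemb.homeomorphImage (Metric.ball 0 1)).symm).trans Homeomorph.unitBall.symm⟩

/-- Pull back of a polynomial along a parametrised line. -/
noncomputable def pull (c d : Fin 2 → ℝ) (P : MvPolynomial (Fin 2) ℝ) : Polynomial ℝ :=
  MvPolynomial.aeval (fun i => Polynomial.C (c i) + Polynomial.X * Polynomial.C (d i)) P

lemma pull_eval (c d : Fin 2 → ℝ) (P : MvPolynomial (Fin 2) ℝ) (t : ℝ) :
    (pull c d P).eval t = eval (c + t • d) P := by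
  unfold pull
  rw [← Polynomial.coe_evalRingHom, MvPolynomial.aeval_def, MvPolynomial.hom_eval₂]
  rw [MvPolynomial.eval, MvPolynomial.coe_eval₂Hom]
  congr 1
  · ext x; simp
  · ext i; simp; ring

lemma poly_eq_of_infinite {I : Set ℝ} (hI : I.Infinite) {p q r : Polynomial ℝ} (hr : r ≠ 0)
    (h : ∀ t ∈ I, r.eval t ≠ 0 → p.eval t = q.eval t) : p = q := by
  have h1 : r * (p - q) = 0 := by
    apply Polynomial.eq_zero_of_infinite_isRoot
    refine hI.mono ?_
    intro t ht
    by_cases h0 : r.eval t = 0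
    · simp [Polynomial.IsRoot, h0]
    · simp [Polynomial.IsRoot, h t ht h0]
  rcases mul_eq_zero.mp h1 with h2 | h2
  · exact absurd h2 hr
  · exact sub_eq_zero.mp h2

lemma upgrade (I : Set ℝ) (hI : I.Infinite) (h : ℝ → ℝ)
    (hloc : ∀ a ∈ I, ∃ p q : Polynomial ℝ, q.eval a ≠ 0 ∧
      ∀ z ∈ I, q.eval z ≠ 0 → h z = p.eval z / q.eval z) :
    ∃ p q : Polynomial ℝ, ∀ z ∈ I, q.eval z ≠ 0 ∧ h z * q.eval z = p.eval z := by
  obtain ⟨a, ha⟩ := hI.nonempty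
  obtain ⟨p, q, hqa, hpq⟩ := hloc a ha
  have hq0 : q ≠ 0 := by rintro rfl; simp at hqa
  have hcop := isCoprime_div_gcd_div_gcd (p := p) hq0
  have hg0 : GCDMonoid.gcd p q ≠ 0 := fun h => hq0 ((gcd_eq_zero_iff _ _).mp h).2
  set g := GCDMonoid.gcd p q with hg
  have hp : g * (p / g) = p := EuclideanDomain.mul_div_cancel' hg0 (gcd_dvd_left p q)
  have hq : g * (q / g) = q := EuclideanDomain.mul_div_cancel' hg0 (gcd_dvd_right p q)
  set p' := p / g
  set q' := q / g
  refine ⟨p', q', ?_⟩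
  intro z hz
  obtain ⟨u, w, hwz, huw⟩ := hloc z hz
  have hw0 : w ≠ 0 := by rintro rfl; simp at hwz
  have key : u * q = p * w := by
    apply poly_eq_of_infinite hI (mul_ne_zero hq0 hw0)
    intro t ht hne
    rw [Polynomial.eval_mul] at hne
    have h1 := hpq t ht (left_ne_zero_of_mul hne)
    have h2 := huw t ht (right_ne_zero_of_mul hne)
    have h3 := left_ne_zero_of_mul hne
    have h4 := right_ne_zero_of_mul hne
    rw [h1] at h2
    field_simp at h2
    simp only [Polynomial.eval_mul]
    linarith
  have key2 : u * q' = p' * w := by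
    apply mul_left_cancel₀ hg0
    linear_combination key + u * hq - w * hp
  have key3 := congrArg (Polynomial.eval z) key2
  simp only [Polynomial.eval_mul] at key3
  have h4 := huw z hz hwz
  constructor
  · intro h0
    rw [h0, mul_zero] at key3
    have hp0 : p'.eval z = 0 := by
      rcases mul_eq_zero.mp key3.symm with h | h
      · exact h
      · exact absurd h hwz
    obtain ⟨x, y, hxy⟩ := hcop
    have := congrArg (Polynomial.eval z) hxy
    simp [hp0, h0] at this
  · rw [h4]
    field_simp
    linarith

lemma ball_inf : (Metric.ball (0:ℝ) 1).Infinite := by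
  rw [Real.ball_eq_Ioo]
  exact Set.Ioo_infinite (by norm_num)

/-- The regularity hypothesis. -/
def RegArcs (U : Set (Fin 2 → ℝ)) (f : (Fin 2 → ℝ) → ℝ) : Prop :=
  ∀ P : MvPolynomial (Fin 2) ℝ, Irreducible P →
      ∀ A : Set (Fin 2 → ℝ), IsSmoothAlgebraicArc P A → A ⊆ U →
        ∀ a ∈ A, ∃ p q : MvPolynomial (Fin 2) ℝ, eval a q ≠ 0 ∧
          ∀ z ∈ A, eval z q ≠ 0 → f z = eval z p / eval z q

lemma line_lemma {U : Set (Fin 2 → ℝ)} {f : (Fin 2 → ℝ) → ℝ} (harc : RegArcs U f)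
    (c d : Fin 2 → ℝ) (hd : d ≠ 0) (hU : ∀ t ∈ Metric.ball (0:ℝ) 1, c + t • d ∈ U) :
    ∃ p q : Polynomial ℝ, ∀ t ∈ Metric.ball (0:ℝ) 1, q.eval t ≠ 0 ∧
      f (c + t • d) * q.eval t = p.eval t := by
  apply upgrade _ ball_inf (fun t => f (c + t • d))
  intro a ha
  obtain ⟨p, q, hq, hpq⟩ := harc _ (linePoly_irreducible c d hd) _ (line_arc c d hd)
    (by rintro _ ⟨t, ht, rfl⟩; exact hU t ht) _ ⟨a, ha, rfl⟩
  refine ⟨pull c d p, pull c d q, by rwa [pull_eval], ?_⟩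
  intro z hz h
  rw [pull_eval] at h ⊢
  rw [pull_eval]
  exact hpq _ ⟨z, hz, rfl⟩ h

lemma sep_rational (I J : Set ℝ) (hI : I.Infinite) (hJ : ¬ J.Countable) (g : ℝ → ℝ → ℝ)
    (h1 : ∀ t ∈ J, ∃ p q : Polynomial ℝ, ∀ s ∈ I, q.eval s ≠ 0 ∧ g s t * q.eval s = p.eval s)
    (h2 : ∀ s ∈ I, ∃ p q : Polynomial ℝ, ∀ t ∈ J, q.eval t ≠ 0 ∧ g s t * q.eval t = p.eval t) :
    ∃ (n : ℕ) (P Q : Fin n → Polynomial ℝ),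
      (∃ s t : ℝ, ∑ k, (Q k).eval t * s ^ (k : ℕ) ≠ 0) ∧
      ∀ s ∈ I, ∀ t ∈ J, g s t * (∑ k, (Q k).eval t * s ^ (k : ℕ)) =
        ∑ k, (P k).eval t * s ^ (k : ℕ) := by
  choose! ph qh hh using h1
  choose! pv qv hv using h2
  obtain ⟨d, hd⟩ : ∃ d : ℕ, {t ∈ J | (ph t).natDegree ≤ d ∧ (qh t).natDegree ≤ d}.Infinite := by
    by_contra hcon
    push Not at hcon
    apply hJ
    refine (Set.countable_iUnion (fun d : ℕ => (hcon d).countable)).mono ?_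
    intro t ht
    exact Set.mem_iUnion.mpr ⟨max (ph t).natDegree (qh t).natDegree, ht, le_max_left _ _,
      le_max_right _ _⟩
  set K := {t ∈ J | (ph t).natDegree ≤ d ∧ (qh t).natDegree ≤ d} with hK
  obtain ⟨T, hTI, hTc⟩ := hI.exists_subset_card_eq (2 * d + 1)
  have hJne : J.Nonempty := by
    by_contra h
    rw [Set.not_nonempty_iff_eq_empty] at h
    exact hJ (h ▸ Set.countable_empty)
  obtain ⟨t0, ht0⟩ := hJne
  have hqv0 : ∀ s ∈ I, qv s ≠ 0 := by
    intro s hs h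
    apply (hv s hs t0 ht0).1
    simp [h]
  -- kernel vector
  let M : Matrix T (Fin (d+1) ⊕ Fin (d+1)) (Polynomial ℝ) := fun i j =>
    Sum.elim (fun k : Fin (d+1) => Polynomial.C ((i:ℝ) ^ (k:ℕ)) * pv i)
      (fun k : Fin (d+1) => - (Polynomial.C ((i:ℝ) ^ (k:ℕ)) * qv i)) j
  have hker : ∃ v, v ≠ 0 ∧ M.mulVec v = 0 := by
    by_contra hcon
    push Not at hcon
    have hinj : Function.Injective (Matrix.mulVecLin M) := by
      rw [← LinearMap.ker_eq_bot, LinearMap.ker_eq_bot']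
      intro m hm
      by_contra hm0
      exact hcon m hm0 hm
    have := card_le_of_injective (Polynomial ℝ) _ hinj
    simp [hTc] at this
    omega
  obtain ⟨v, hv0, hMv⟩ := hker
  set Q : Fin (d+1) → Polynomial ℝ := fun k => v (Sum.inl k) with hQ
  set P : Fin (d+1) → Polynomial ℝ := fun k => v (Sum.inr k) with hP
  have hrow : ∀ s ∈ T, (∑ k, Q k * Polynomial.C (s ^ (k:ℕ))) * pv s =
      (∑ k, P k * Polynomial.C (s ^ (k:ℕ))) * qv s := by
    intro s hs
    have h := congrFun hMv ⟨s, hs⟩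
    simp only [Matrix.mulVec, dotProduct, Fintype.sum_sum_type, M, Sum.elim_inl, Sum.elim_inr,
      Pi.zero_apply] at h
    rw [Finset.sum_mul, Finset.sum_mul, ← sub_eq_zero, ← h, sub_eq_add_neg, ← Finset.sum_neg_distrib]
    congr 1
    · exact Finset.sum_congr rfl fun k _ => by simp only [hQ]; ring
    · exact Finset.sum_congr rfl fun k _ => by simp only [hP]; ring
  -- a nonzero polynomial whose roots are excluded
  obtain ⟨j, hj⟩ := Function.ne_iff.mp hv0
  have hj : v j ≠ 0 := hj
  set r : Polynomial ℝ := v j * ∏ s ∈ T, qv s with hr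
  have hr0 : r ≠ 0 := mul_ne_zero hj (Finset.prod_ne_zero_iff.mpr fun s hs => hqv0 s (hTI hs))
  have hrow2 : ∀ b ∈ K, r.eval b ≠ 0 →
      (∃ s, ∑ k, (Q k).eval b * s ^ (k:ℕ) ≠ 0) ∧
      ∀ s ∈ I, g s b * (∑ k, (Q k).eval b * s ^ (k : ℕ)) = ∑ k, (P k).eval b * s ^ (k : ℕ) := by
    intro b hb hrb
    obtain ⟨hbJ, hpd, hqd⟩ := hb
    rw [hr, Polynomial.eval_mul, Polynomial.eval_prod] at hrb
    have hjb := left_ne_zero_of_mul hrb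
    let Qb : Polynomial ℝ := ∑ k : Fin (d+1), Polynomial.C ((Q k).eval b) * Polynomial.X ^ (k:ℕ)
    let Pb : Polynomial ℝ := ∑ k : Fin (d+1), Polynomial.C ((P k).eval b) * Polynomial.X ^ (k:ℕ)
    have hQe : ∀ s, Qb.eval s = ∑ k, (Q k).eval b * s ^ (k : ℕ) := by
      intro s; simp [Qb, Polynomial.eval_finsetSum]
    have hPe : ∀ s, Pb.eval s = ∑ k, (P k).eval b * s ^ (k : ℕ) := by
      intro s; simp [Pb, Polynomial.eval_finsetSum]
    have hdeg : ∀ R : Fin (d+1) → Polynomial ℝ,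
        (∑ k : Fin (d+1), Polynomial.C ((R k).eval b) * Polynomial.X ^ (k:ℕ) :
          Polynomial ℝ).natDegree ≤ d := by
      intro R
      apply Polynomial.natDegree_sum_le_of_forall_le
      intro k _
      exact (Polynomial.natDegree_C_mul_X_pow_le _ _).trans (Nat.lt_succ_iff.mp k.2)
    have hcoeff : ∀ (R : Fin (d+1) → Polynomial ℝ) (k : Fin (d+1)),
        (∑ k : Fin (d+1), Polynomial.C ((R k).eval b) * Polynomial.X ^ (k:ℕ) :
          Polynomial ℝ).coeff k = (R k).eval b := by
      intro R k
      simp [Polynomial.coeff_X_pow, Fin.val_inj]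
    have heq : Qb * ph b - Pb * qh b = 0 := by
      apply Polynomial.eq_zero_of_natDegree_lt_card_of_eval_eq_zero' _ T
      · intro s hs
        have e1 := congrArg (Polynomial.eval b) (hrow s hs)
        simp only [Polynomial.eval_mul, Polynomial.eval_finsetSum, Polynomial.eval_C] at e1
        rw [← hQe, ← hPe, ← (hv s (hTI hs) b hbJ).2] at e1
        have e2 := (hv s (hTI hs) b hbJ).1
        have e3 := (hh b hbJ s (hTI hs)).2
        have e4 : Qb.eval s * g s b = Pb.eval s := by
          apply mul_right_cancel₀ e2
          linarith
        simp only [Polynomial.eval_sub, Polynomial.eval_mul]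
        rw [← e3, ← e4]; ring
      · rw [hTc]
        refine Nat.lt_succ_of_le ((Polynomial.natDegree_sub_le _ _).trans (max_le ?_ ?_))
        · refine Polynomial.natDegree_mul_le.trans ?_
          have := hdeg Q
          change Qb.natDegree ≤ d at this
          omega
        · refine Polynomial.natDegree_mul_le.trans ?_
          have := hdeg P
          change Pb.natDegree ≤ d at this
          omega
    have hI0 : ∃ s, s ∈ I := hI.nonempty
    obtain ⟨s0, hs0⟩ := hI0
    have hqh0 : qh b ≠ 0 := by
      intro h
      apply (hh b hbJ s0 hs0).1
      simp [h]
    constructor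
    · by_contra hcon
      push Not at hcon
      have hQb0 : Qb = 0 := Polynomial.funext fun s => by rw [hQe, hcon]; simp
      rw [hQb0, zero_mul, zero_sub, neg_eq_zero] at heq
      have hPb0 : Pb = 0 := (mul_eq_zero.mp heq).resolve_right hqh0
      apply hjb
      rcases j with k | k
      · have := hcoeff Q k
        change Qb.coeff k = _ at this
        rw [hQb0] at this
        simpa using this.symm
      · have := hcoeff P k
        change Pb.coeff k = _ at this
        rw [hPb0] at this
        simpa using this.symm
    · intro s hs
      have e1 := congrArg (Polynomial.eval s) heq
      simp only [Polynomial.eval_mul, Polynomial.eval_sub, Polynomial.eval_zero] at e1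
      obtain ⟨e2, e3⟩ := hh b hbJ s hs
      rw [← hQe, ← hPe]
      apply mul_right_cancel₀ e2
      rw [← e3] at e1
      linarith
  refine ⟨d+1, P, Q, ?_, ?_⟩
  · by_contra hcon
    push Not at hcon
    have : r = 0 := by
      apply Polynomial.eq_zero_of_infinite_isRoot
      refine hd.mono ?_
      intro b hb
      by_contra hb0
      obtain ⟨⟨s, hs⟩, -⟩ := hrow2 b hb hb0
      exact hs (hcon s b)
    exact hr0 this
  · intro s hs t ht
    have key : (∑ k, Q k * Polynomial.C (s ^ (k:ℕ))) * pv s =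
      (∑ k, P k * Polynomial.C (s ^ (k:ℕ))) * qv s := by
      apply poly_eq_of_infinite hd hr0
      intro b hb hb0
      have e1 := (hrow2 b hb hb0).2 s hs
      have e2 := (hv s hs b hb.1).2
      simp only [Polynomial.eval_mul, Polynomial.eval_finsetSum, Polynomial.eval_C]
      rw [← e1, ← e2]; ring
    have key2 := congrArg (Polynomial.eval t) key
    simp only [Polynomial.eval_mul, Polynomial.eval_finsetSum, Polynomial.eval_C] at key2
    obtain ⟨e1, e2⟩ := hv s hs t ht
    apply mul_right_cancel₀ e1
    rw [← e2] at key2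
    linarith

/-- Assemble a bivariate polynomial from coefficients, in rescaled coordinates. -/
noncomputable def assemble (c : Fin 2 → ℝ) (r : ℝ) {n : ℕ} (Q : Fin n → Polynomial ℝ) :
    MvPolynomial (Fin 2) ℝ :=
  ∑ k, Polynomial.aeval (C r⁻¹ * (X 1 - C (c 1)) : MvPolynomial (Fin 2) ℝ) (Q k) *
    (C r⁻¹ * (X 0 - C (c 0))) ^ (k : ℕ)

lemma assemble_eval (c : Fin 2 → ℝ) (r : ℝ) {n : ℕ} (Q : Fin n → Polynomial ℝ)
    (x : Fin 2 → ℝ) : eval x (assemble c r Q) =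
      ∑ k, (Q k).eval (r⁻¹ * (x 1 - c 1)) * (r⁻¹ * (x 0 - c 0)) ^ (k : ℕ) := by
  unfold assemble
  rw [map_sum]
  refine Finset.sum_congr rfl fun k _ => ?_
  rw [map_mul, map_pow]
  congr 1
  · rw [Polynomial.aeval_def, Polynomial.hom_eval₂, Polynomial.eval]
    congr 1
    · ext y; simp
    · simp
  · simp

lemma box_lemma {U : Set (Fin 2 → ℝ)} {f : (Fin 2 → ℝ) → ℝ} (harc : RegArcs U f)
    (c : Fin 2 → ℝ) (r : ℝ) (hr : 0 < r) (hB : Metric.ball c r ⊆ U) :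
    ∃ P Q : MvPolynomial (Fin 2) ℝ, Q ≠ 0 ∧
      ∀ x ∈ Metric.ball c r, f x * eval x Q = eval x P := by
  have hmem : ∀ s ∈ Metric.ball (0:ℝ) 1, ∀ t ∈ Metric.ball (0:ℝ) 1,
      c + ![r * s, r * t] ∈ U := by
    intro s hs t ht
    apply hB
    rw [mem_ball_zero_iff, Real.norm_eq_abs] at hs ht
    rw [mem_ball_iff_norm, add_sub_cancel_left, pi_norm_lt_iff hr]
    intro i
    fin_cases i
    · simp [abs_mul, abs_of_pos hr]; nlinarith
    · simp [abs_mul, abs_of_pos hr]; nlinarith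
  obtain ⟨n, P, Q, ⟨s, t, hQ⟩, hPQ⟩ := sep_rational (Metric.ball 0 1) (Metric.ball 0 1) ball_inf
    (by
      rw [Real.ball_eq_Ioo]
      intro h
      have h1 := Cardinal.mk_Ioo_real (show (0 - 1 : ℝ) < 0 + 1 by norm_num)
      have h2 := h.le_aleph0
      rw [h1] at h2
      exact absurd h2 (not_le.mpr Cardinal.aleph0_lt_continuum))
    (fun s t => f (c + ![r * s, r * t]))
    (by
      intro t ht
      have e : ∀ s : ℝ, c + ![r * s, r * t] = (c + ![0, r * t]) + s • ![r, 0] := by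
        intro s
        ext i
        fin_cases i <;> simp [mul_comm, Matrix.vecHead, Matrix.vecTail]
      simp only [e]
      refine line_lemma harc _ _ ?_ ?_
      · intro h
        have := congrFun h 0
        simp at this
        exact hr.ne' this
      · intro s hs
        rw [← e]
        exact hmem s hs t ht)
    (by
      intro s hs
      have e : ∀ t : ℝ, c + ![r * s, r * t] = (c + ![r * s, 0]) + t • ![0, r] := by
        intro s
        ext i
        fin_cases i <;> simp [mul_comm, Matrix.vecHead, Matrix.vecTail]
      simp only [e]
      refine line_lemma harc _ _ ?_ ?_
      · intro h
        have := congrFun h 1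
        simp at this
        exact hr.ne' this
      · intro t ht
        rw [← e]
        exact hmem s hs t ht)
  refine ⟨assemble c r P, assemble c r Q, ?_, ?_⟩
  · intro h0
    apply hQ
    have := assemble_eval c r Q (c + ![r * s, r * t])
    rw [h0] at this
    simpa [hr.ne'] using this.symm
  · intro x hx
    rw [assemble_eval, assemble_eval]
    have hx' : ∀ i, r⁻¹ * (x i - c i) ∈ Metric.ball (0:ℝ) 1 := by
      intro i
      rw [mem_ball_iff_norm, pi_norm_lt_iff hr] at hx
      have := hx i
      rw [mem_ball_zero_iff, norm_mul, norm_inv, Real.norm_of_nonneg hr.le, inv_mul_lt_iff₀ hr]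
      simpa using this
    have h := hPQ _ (hx' 0) _ (hx' 1)
    have e : c + ![r * (r⁻¹ * (x 0 - c 0)), r * (r⁻¹ * (x 1 - c 1))] = x := by
      ext i
      fin_cases i <;> simp [hr.ne']
    simp only [e] at h
    exact h

lemma mv_eq_of_open {P Q : MvPolynomial (Fin 2) ℝ} {x : Fin 2 → ℝ} {r : ℝ} (hr : 0 < r)
    (h : ∀ z ∈ Metric.ball x r, eval z P = eval z Q) : P = Q := by
  apply MvPolynomial.funext_set (fun i => Metric.ball (x i) r)
  · intro i
    rw [Real.ball_eq_Ioo]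
    exact Set.Ioo_infinite (by linarith)
  · intro z hz
    apply h
    rw [ball_pi _ hr]
    exact hz

lemma extend_lemma {U : Set (Fin 2 → ℝ)} {f : (Fin 2 → ℝ) → ℝ} (harc : RegArcs U f)
    (c : Fin 2 → ℝ) (r : ℝ) (hr : 0 < r) (hB : Metric.ball c r ⊆ U)
    (P Q P0 Q0 : MvPolynomial (Fin 2) ℝ) (hQ : Q ≠ 0)
    (hPQ : ∀ x ∈ Metric.ball c r, f x * eval x Q = eval x P)
    (hc : P0 * Q = P * Q0) :
    ∀ x ∈ Metric.ball c r, f x * eval x Q0 = eval x P0 := by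
  intro x hx
  by_cases hQx : eval x Q = 0
  swap
  · have h1 := congrArg (eval x) hc
    simp only [map_mul] at h1
    rw [← hPQ x hx] at h1
    apply mul_right_cancel₀ hQx
    linarith
  obtain ⟨y, hy⟩ : ∃ y, eval y Q ≠ 0 := by
    by_contra hcon
    push Not at hcon
    exact hQ (MvPolynomial.funext fun y => by simpa using hcon y)
  have hyx : y - x ≠ 0 := by
    intro h
    rw [sub_eq_zero] at h
    exact hy (h ▸ hQx)
  obtain ⟨δ, hδ, hδB⟩ := Metric.isOpen_iff.mp Metric.isOpen_ball x hx
  have hn : 0 < ‖y - x‖ := norm_pos_iff.mpr hyx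
  set ε := δ / ‖y - x‖ with hε
  have hεpos : 0 < ε := div_pos hδ hn
  have hline : ∀ t ∈ Metric.ball (0:ℝ) 1, x + t • (ε • (y - x)) ∈ Metric.ball c r := by
    intro t ht
    apply hδB
    rw [mem_ball_zero_iff] at ht
    rw [mem_ball_iff_norm, add_sub_cancel_left, norm_smul, norm_smul, Real.norm_of_nonneg hεpos.le,
      hε, div_mul_cancel₀ _ hn.ne']
    nlinarith
  set d := ε • (y - x) with hd
  obtain ⟨u, w, huw⟩ := line_lemma harc x d (smul_ne_zero hεpos.ne' hyx)
    (fun t ht => hB (hline t ht))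
  have hpQ : pull x d Q ≠ 0 := by
    intro h
    have h1 := pull_eval x d Q ε⁻¹
    rw [h, hd, smul_smul, inv_mul_cancel₀ hεpos.ne', one_smul, add_sub_cancel] at h1
    exact hy (by simpa using h1.symm)
  have k1 : pull x d P * w = pull x d Q * u := by
    apply poly_eq_of_infinite ball_inf one_ne_zero
    intro t ht _
    simp only [Polynomial.eval_mul, pull_eval]
    rw [← hPQ _ (hline t ht), ← (huw t ht).2]; ring
  have k2 : pull x d P0 * pull x d Q = pull x d P * pull x d Q0 := by
    have := congrArg (pull x d) hc
    simpa only [pull, map_mul] using this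
  have k3 : pull x d P0 * w = pull x d Q0 * u := by
    apply mul_left_cancel₀ hpQ
    linear_combination w * k2 + pull x d Q0 * k1
  have k4 := congrArg (Polynomial.eval 0) k3
  simp only [Polynomial.eval_mul, pull_eval, zero_smul, add_zero] at k4
  obtain ⟨h1, h2⟩ := huw 0 (by simp)
  rw [zero_smul, add_zero] at h2
  apply mul_right_cancel₀ h1
  rw [← h2] at k4
  linarith

/-- **Theorem 2.4** for domains in the plane (without the codimension-two claim). If
`f : U → ℝ`, defined on a nonempty connected open set `U ⊆ ℝ²`, is regular on every
smooth algebraic arc contained in `U`, then `f` agrees with a rational function `p/q`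
on `{x ∈ U : q(x) ≠ 0}`. -/
theorem rational_of_regular_on_smooth_algebraic_arcs_plane
    (U : Set (Fin 2 → ℝ)) (hU : IsOpen U) (hne : U.Nonempty) (hconn : IsConnected U)
    (f : (Fin 2 → ℝ) → ℝ)
    (harc : ∀ P : MvPolynomial (Fin 2) ℝ, Irreducible P →
      ∀ A : Set (Fin 2 → ℝ), IsSmoothAlgebraicArc P A → A ⊆ U →
        ∀ a ∈ A, ∃ p q : MvPolynomial (Fin 2) ℝ, eval a q ≠ 0 ∧
          ∀ z ∈ A, eval z q ≠ 0 → f z = eval z p / eval z q) :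
    ∃ p q : MvPolynomial (Fin 2) ℝ, q ≠ 0 ∧
      ∀ x ∈ U, eval x q ≠ 0 → f x = eval x p / eval x q := by
  obtain ⟨x0, hx0⟩ := hne
  obtain ⟨r0, hr0, hB0⟩ := Metric.isOpen_iff.mp hU x0 hx0
  obtain ⟨P0, Q0, hQ0, h0⟩ := box_lemma harc x0 r0 hr0 hB0
  have hsub : U ⊆ interior {x | f x * eval x Q0 = eval x P0} := by
    apply hconn.isPreconnected.subset_of_closure_inter_subset isOpen_interior
    · refine ⟨x0, hx0, ?_⟩
      rw [mem_interior]
      exact ⟨_, h0, Metric.isOpen_ball, Metric.mem_ball_self hr0⟩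
    · rintro x ⟨hx, hxU⟩
      obtain ⟨r, hr, hB⟩ := Metric.isOpen_iff.mp hU x hxU
      obtain ⟨P, Q, hQ, h1⟩ := box_lemma harc x r hr hB
      obtain ⟨y, hyB, hyS⟩ := mem_closure_iff.mp hx _ Metric.isOpen_ball (Metric.mem_ball_self hr)
      obtain ⟨δ, hδ, hδB⟩ := Metric.isOpen_iff.mp
        (Metric.isOpen_ball.inter isOpen_interior) y ⟨hyB, hyS⟩
      have hc : P0 * Q = P * Q0 := by
        apply mv_eq_of_open hδ
        intro z hz
        have e1 := h1 z (hδB hz).1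
        have e2 : z ∈ {x | f x * eval x Q0 = eval x P0} := interior_subset (hδB hz).2
        change f z * eval z Q0 = eval z P0 at e2
        rw [map_mul, map_mul, ← e1, ← e2]
        ring
      rw [mem_interior]
      exact ⟨_, extend_lemma harc x r hr hB P Q P0 Q0 hQ h1 hc, Metric.isOpen_ball,
        Metric.mem_ball_self hr⟩
  refine ⟨P0, Q0, hQ0, ?_⟩
  intro x hx hq
  have h : x ∈ {x | f x * eval x Q0 = eval x P0} := interior_subset (hsub hx)
  change f x * eval x Q0 = eval x P0 at h
  rw [eq_div_iff hq, h]
end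

section
/- Let U ⊆ ℝ^n be a nonempty open set and let f : U → ℝ be curve-rational. Then f is continuous on U and rational: there exist real polynomials p, q in n variables, q not the zero polynomial, such that f(x) = p(x)/q(x) for every x ∈ U with q(x) ≠ 0. (The main implication of Theorem 1.7 for open subsets of ℝ^n.) -/
open MvPolynomial

/-- The set of real points of the subvariety of affine `n`-space defined by an ideal `I`
of the real polynomial ring. -/
def realPoints {n : ℕ} (I : Ideal (MvPolynomial (Fin n) ℝ)) : Set (Fin n → ℝ) :=
  {x | ∀ P ∈ I, eval x P = 0}

/-- `f : W → ℝ` is curve-rational: for every irreducible real algebraic curve in affine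
`n`-space (encoded by a prime ideal `I` with one-dimensional quotient), the restriction
of `f` to `W ∩ Z(I)` is continuous and rational on the curve. -/
def CurveRational {n : ℕ} (W : Set (Fin n → ℝ)) (f : (Fin n → ℝ) → ℝ) : Prop :=
  ∀ I : Ideal (MvPolynomial (Fin n) ℝ), I.IsPrime →
    ringKrullDim (MvPolynomial (Fin n) ℝ ⧸ I) = 1 →
    ContinuousOn f (W ∩ realPoints I) ∧
    ∃ p q : MvPolynomial (Fin n) ℝ, q ∉ I ∧
      ∀ x ∈ W ∩ realPoints I, eval x q ≠ 0 → f x = eval x p / eval x q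


lemma aux_card_le {n : ℕ} {k F K : Type} [Field k] [Field F] [Field K] [Algebra k F] [Algebra k K]
    [Algebra F K] [IsScalarTower k F K] (a : Fin n → F) (ha : AlgebraicIndependent k a)
    (ξ : Fin (n+1) → K)
    (h : ∀ i, IsAlgebraic (Algebra.adjoin k (Set.range ξ)) (algebraMap F K (a i)))
    (s : ℕ) (y : Fin s → K) (hy : AlgebraicIndependent F y)
    (hmem : ∀ i, y i ∈ Algebra.adjoin F (Set.range ξ)) : s ≤ 1 := by
  obtain ⟨B, hB⟩ := (AlgebraicIndependent.matroid F K).exists_isBasis (Set.range ξ)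
  have hBi : AlgebraicIndependent F (fun x : B => (x : K)) := hB.indep
  have h1 : (Set.range y).encard ≤ B.encard := by
    rw [hB.encard_eq_eRk, ← Matroid.eRk_closure_eq]
    refine Matroid.Indep.encard_le_eRk_of_subset ?_ ?_
    · exact hy.to_subtype_range
    · rw [AlgebraicIndependent.matroid_closure_eq]
      rintro _ ⟨i, rfl⟩
      exact isAlgebraic_algebraMap (⟨y i, hmem i⟩ : Algebra.adjoin F (Set.range ξ))
  have h2 := ha.sumElim_comp hBi
  have h3 : (Set.range (Sum.elim (fun x : B => (x : K)) (algebraMap F K ∘ a))).encard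
      ≤ (Set.range ξ).encard := by
    refine le_trans ?_ (Matroid.eRk_le_encard (AlgebraicIndependent.matroid k K) _)
    rw [← Matroid.eRk_closure_eq]
    refine Matroid.Indep.encard_le_eRk_of_subset ?_ ?_
    · exact h2.to_subtype_range
    · rw [AlgebraicIndependent.matroid_closure_eq]
      rintro _ ⟨i | i, rfl⟩
      · exact isAlgebraic_algebraMap
          (⟨i.1, Algebra.subset_adjoin (hB.subset i.2)⟩ : Algebra.adjoin k (Set.range ξ))
      · exact h i
  rw [← Set.image_univ, h2.injective.injOn.encard_image] at h3
  rw [← Set.image_univ, hy.injective.injOn.encard_image] at h1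
  have h4 : (Set.range ξ).encard ≤ (n + 1 : ℕ) := by
    rw [← Set.image_univ]
    refine (Set.encard_image_le _ _).trans ?_
    simp
  have h5 := h3.trans h4
  simp only [Set.encard_univ, ENat.card_sum, ENat.card_coe_set_eq, ENat.card_eq_coe_fintype_card,
    Fintype.card_fin] at h5 h1
  have hBf : B.encard ≠ ⊤ := by
    intro h
    rw [h] at h5
    simp at h5
  lift B.encard to ℕ using hBf with b
  norm_cast at h5 h1
  omega

/-- Krull dimension bound for the kernel of a map to a field -/
lemma aux_dim_le {n m : ℕ} {k F K : Type} [Field k] [Field F] [Field K] [Algebra k F] [Algebra k K]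
    [Algebra F K] [IsScalarTower k F K] (a : Fin m → F) (ha : AlgebraicIndependent k a)
    (ξ : Fin (m+1) → K)
    (h : ∀ i, IsAlgebraic (Algebra.adjoin k (Set.range ξ)) (algebraMap F K (a i)))
    (φ : MvPolynomial (Fin n) F →ₐ[F] K) (hφ : ∀ i, φ (X i) ∈ Set.range ξ) :
    ringKrullDim (MvPolynomial (Fin n) F ⧸ RingHom.ker φ) ≤ 1 := by
  obtain ⟨s, -, g, ginj, gint⟩ := exists_integral_inj_algHom_of_quotient (RingHom.ker φ)
    (RingHom.ker_ne_top _)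
  have hs : s ≤ 1 := by
    refine aux_card_le a ha ξ h s (fun i => Ideal.kerLiftAlg φ (g (X i))) ?_ ?_
    · have : AlgebraicIndependent F (X : Fin s → MvPolynomial (Fin s) F) :=
        MvPolynomial.algebraicIndependent_X _ _
      exact this.map' (f := (Ideal.kerLiftAlg φ).comp g)
        ((Ideal.kerLiftAlg_injective φ).comp ginj)
    · intro i
      obtain ⟨P, hP⟩ := Ideal.Quotient.mk_surjective (g (X i))
      rw [← hP, Ideal.kerLiftAlg_mk]
      have : φ = aeval (fun i => φ (X i)) := by ext; simp
      rw [this]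
      have h2 : (aeval (fun i => φ (X i)) : MvPolynomial (Fin n) F →ₐ[F] K).range ≤
          Algebra.adjoin F (Set.range ξ) := by
        rw [← Algebra.adjoin_range_eq_range_aeval]
        apply Algebra.adjoin_mono
        rintro _ ⟨j, rfl⟩
        exact hφ j
      exact h2 ⟨P, rfl⟩
  have h1 : ringKrullDim (MvPolynomial (Fin n) F ⧸ RingHom.ker φ) ≤
      ringKrullDim (MvPolynomial (Fin s) F) := by
    algebraize [g.toRingHom]
    refine Order.krullDim_le_of_strictMono (PrimeSpectrum.comap g.toRingHom) ?_
    intro p q hpq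
    exact Ideal.IsIntegral.comap_lt_comap (R := MvPolynomial (Fin s) F) hpq
  refine h1.trans ?_
  rw [MvPolynomial.ringKrullDim_of_isNoetherianRing, ringKrullDim_eq_zero_of_field]
  simp
  exact_mod_cast hs


lemma aux_generic (k : Subfield ℝ) (hk : Countable k) (n : ℕ) :
    ∃ a : Fin n → ℝ, AlgebraicIndependent k a := by
  obtain ⟨s, hs⟩ := exists_isTranscendenceBasis k ℝ
  have hinf : s.Infinite := by
    intro hfin
    have : Countable s := hfin.countable.to_subtype
    have h1 : Algebra.IsAlgebraic (Algebra.adjoin k (Set.range ((↑) : s → ℝ))) ℝ := hs.isAlgebraic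
    have h2 := Algebra.IsAlgebraic.cardinalMk_le_max (Algebra.adjoin k (Set.range ((↑) : s → ℝ))) ℝ
    have h3 := Algebra.lift_cardinalMk_adjoin_le k (Set.range ((↑) : s → ℝ))
    have h4 : Cardinal.mk (Algebra.adjoin k (Set.range ((↑) : s → ℝ))) ≤ Cardinal.aleph0 := by
      simp only [Cardinal.lift_id] at h3
      refine h3.trans ?_
      simp only [max_le_iff, le_refl, and_true]
      refine ⟨Cardinal.mk_le_aleph0_iff.2 hk, ?_⟩
      rw [Cardinal.mk_le_aleph0_iff]
      simpa using this
    have h5 : Cardinal.mk ℝ ≤ Cardinal.aleph0 := h2.trans (max_le h4 le_rfl)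
    rw [Cardinal.mk_real] at h5
    exact absurd h5 (not_le.2 Cardinal.aleph0_lt_continuum)
  have : Infinite s := hinf.to_subtype
  exact ⟨fun i => ((Infinite.natEmbedding s i : s) : ℝ), hs.1.comp (fun i : Fin n => Infinite.natEmbedding s i)
    ((Infinite.natEmbedding s).injective.comp Fin.val_injective)⟩

lemma aux_hasDeriv {n : ℕ} (g : MvPolynomial (Fin n) ℝ) (x : Fin n → ℝ) (i : Fin n) :
    HasDerivAt (fun t => eval (Function.update x i t) g) (eval x (pderiv i g)) (x i) := by
  induction g using MvPolynomial.induction_on with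
  | C a => simpa using hasDerivAt_const (x i) a
  | add p q hp hq => simpa using hp.fun_add hq
  | mul_X p j hp =>
    have hX : HasDerivAt (fun t => Function.update x i t j) (if j = i then 1 else 0) (x i) := by
      by_cases h : j = i
      · subst h; simpa using hasDerivAt_id' (x j)
      · simpa [h] using hasDerivAt_const (x i) (x j)
    have := hp.fun_mul hX
    simp only [map_mul, eval_X, Function.update_eq_self] at this ⊢
    refine this.congr_deriv ?_
    rw [Derivation.leibniz, pderiv_X]
    by_cases h : j = i
    · subst h; simp; ring
    · have h' : i ≠ j := fun h' => h h'.symm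
      simp [h, h', Pi.single_apply]; ring

lemma aux_crit {n : ℕ} (g : MvPolynomial (Fin n) ℝ) (x0 a : Fin n → ℝ) (R : ℝ)
    (hacc : ∃ x : Fin n → ℝ, ∑ i, (x i - x0 i)^2 < R ∧ 0 < eval x g) :
    ∃ x : Fin n → ℝ, ∑ i, (x i - x0 i)^2 < R ∧ 0 < eval x g ∧
      ∀ i, eval x g * (R - ∑ i, (x i - x0 i)^2) * a i =
        2 * (x i - x0 i) * eval x g - eval x (pderiv i g) * (R - ∑ i, (x i - x0 i)^2) := by
  set Φ : (Fin n → ℝ) → ℝ := fun x =>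
    eval x g * (R - ∑ i, (x i - x0 i)^2) * Real.exp (∑ i, a i * x i) with hΦ
  have hΦc : Continuous Φ := by
    have := MvPolynomial.continuous_eval g
    fun_prop
  set S : Set (Fin n → ℝ) := {x | ∑ i, (x i - x0 i)^2 ≤ R} with hS
  obtain ⟨y, hy, hgy⟩ := hacc
  have hScomp : IsCompact S := by
    refine Metric.isCompact_of_isClosed_isBounded ?_ ?_
    · exact isClosed_le (by fun_prop) continuous_const
    · refine (Metric.isBounded_closedBall (x := x0) (r := R + 1)).subset ?_
      intro x hx
      have hx' : ∑ i, (x i - x0 i)^2 ≤ R := hx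
      have hR : 0 ≤ R := le_trans (Finset.sum_nonneg fun i _ => sq_nonneg _) hx'
      rw [Metric.mem_closedBall, dist_pi_le_iff (by linarith)]
      intro i
      rw [Real.dist_eq]
      have : (x i - x0 i)^2 ≤ R :=
        (Finset.single_le_sum (f := fun i => (x i - x0 i)^2) (fun i _ => sq_nonneg _)
          (Finset.mem_univ i)).trans hx'
      rw [← sq_abs] at this
      nlinarith [abs_nonneg (x i - x0 i)]
  obtain ⟨x, hxS, hmax⟩ := hScomp.exists_isMaxOn ⟨y, hy.le⟩ hΦc.continuousOn
  have hpos : 0 < Φ x := lt_of_lt_of_le (by simp only [hΦ]; have := sub_pos.2 hy; positivity) (hmax hy.le)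
  have hxS' : ∑ i, (x i - x0 i)^2 ≤ R := hxS
  have hlt : ∑ i, (x i - x0 i)^2 < R := by
    refine lt_of_le_of_ne hxS' fun h => ?_
    simp [hΦ, h] at hpos
  have hgx : 0 < eval x g := by
    have h1 : 0 < Real.exp (∑ i, a i * x i) := Real.exp_pos _
    have h2 := sub_pos.2 hlt
    simp only [hΦ] at hpos
    exact pos_of_mul_pos_left (pos_of_mul_pos_left hpos h1.le) h2.le
  refine ⟨x, hlt, hgx, fun i => ?_⟩
  have hnhds : ∀ᶠ z in nhds x, z ∈ S := by
    have : IsOpen {z : Fin n → ℝ | ∑ i, (z i - x0 i)^2 < R} :=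
      isOpen_lt (by fun_prop) continuous_const
    filter_upwards [this.mem_nhds hlt] with z hz using le_of_lt hz
  have hloc : IsLocalMax Φ x := by
    filter_upwards [hnhds] with z hz using hmax hz
  have hcu : Continuous (fun t : ℝ => Function.update x i t) := by fun_prop
  have hloc2 : IsLocalMax (fun t => Φ (Function.update x i t)) (x i) := by
    have := hcu.tendsto (x i)
    rw [Function.update_eq_self] at this
    have := this.eventually hloc
    simpa [IsLocalMax, IsMaxFilter] using this
  have hcoord : ∀ j, HasDerivAt (fun t => Function.update x i t j) (if j = i then 1 else 0) (x i) := by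
    intro j
    by_cases h : j = i
    · subst h; simpa using hasDerivAt_id' (x j)
    · simpa [h] using hasDerivAt_const (x i) (x j)
  have hd1 := aux_hasDeriv g x i
  have hd2 : HasDerivAt (fun t => R - ∑ j, (Function.update x i t j - x0 j)^2)
      (- (2 * (x i - x0 i))) (x i) := by
    have := (HasDerivAt.fun_sum (u := Finset.univ) fun j _ => ((hcoord j).sub_const (x0 j)).pow 2).const_sub R
    refine this.congr_deriv ?_
    simp
  have hd3 : HasDerivAt (fun t => Real.exp (∑ j, a j * Function.update x i t j))
      (Real.exp (∑ j, a j * x j) * a i) (x i) := by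
    have := (HasDerivAt.fun_sum (u := Finset.univ) fun j _ => ((hcoord j).const_mul (a j))).exp
    refine this.congr_deriv ?_
    simp
  have hd := (hd1.mul hd2).mul hd3
  have h0 := hloc2.hasDerivAt_eq_zero hd
  simp only [Function.update_eq_self, Pi.mul_apply] at h0
  have he := Real.exp_pos (∑ j, a j * x j)
  have : Real.exp (∑ j, a j * x j) * (eval x g * (R - ∑ i, (x i - x0 i)^2) * a i -
        (2 * (x i - x0 i) * eval x g - eval x (pderiv i g) * (R - ∑ i, (x i - x0 i)^2))) = 0 := by
    linear_combination h0
  rcases mul_eq_zero.1 this with h | h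
  · exact absurd h he.ne'
  · linarith


lemma aux_alg {k K : Type} [Field k] [Field K] [Algebra k K] (A : Subalgebra k K) (u v α : K)
    (hu : u ∈ A) (hv : v ∈ A) (hv0 : v ≠ 0) (h : v * α = u) : IsAlgebraic A α := by
  refine ⟨Polynomial.C ⟨v, hv⟩ * Polynomial.X - Polynomial.C ⟨u, hu⟩, ?_, ?_⟩
  · intro h0
    have := congrArg (fun p => Polynomial.coeff p 1) h0
    simp [Polynomial.coeff_C] at this
    exact hv0 (congrArg Subtype.val this)
  · simp only [map_sub, map_mul, Polynomial.aeval_C, Polynomial.aeval_X]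
    rw [sub_eq_zero]
    exact h

lemma aux_field (K : Type) [Field K] (ψ : (ℕ → ℝ) →+* K)
    {n : ℕ} (g : MvPolynomial (Fin n) ℝ) (x0 : Fin n → ℝ)
    (hacc : ∀ R > 0, ∃ x : Fin n → ℝ, ∑ i, (x i - x0 i)^2 < R ∧ 0 < eval x g)
    (hψ : ∀ u : ℕ → ℝ, (∀ m, u m ≠ 0) → ψ u ≠ 0) :
    ∃ x : ℕ → Fin n → ℝ, (∀ m, ∑ i, (x m i - x0 i)^2 < 1 / ((m : ℝ) + 1) ∧ 0 < eval (x m) g) ∧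
      ∃ I : Ideal (MvPolynomial (Fin n) ℝ), I.IsPrime ∧
        ringKrullDim (MvPolynomial (Fin n) ℝ ⧸ I) ≤ 1 ∧
        ∀ P, P ∈ I ↔ ψ (fun m => eval (x m) P) = 0 := by
  classical
  set k : Subfield ℝ := Subfield.closure (g.coeffs ∪ Set.range x0) with hk
  have hkc : Countable k := by
    rw [← Cardinal.mk_le_aleph0_iff]
    refine (Subfield.cardinalMk_closure_le_max _).trans (max_le ?_ le_rfl)
    rw [Cardinal.mk_le_aleph0_iff]
    exact ((Finset.countable_toSet _).union (Set.countable_range x0)).to_subtype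
  obtain ⟨a, ha⟩ := aux_generic k hkc n
  have hR : ∀ m : ℕ, (0 : ℝ) < 1 / ((m : ℝ) + 1) := fun m => by positivity
  choose x hx1 hx2 hx3 using fun m : ℕ => aux_crit g x0 a (1 / ((m : ℝ) + 1)) (hacc _ (hR m))
  refine ⟨x, fun m => ⟨hx1 m, hx2 m⟩, ?_⟩
  let _ : Algebra ℝ K := (ψ.comp (Pi.constRingHom ℕ ℝ)).toAlgebra
  have hmap : ∀ r : ℝ, algebraMap ℝ K r = ψ (fun _ => r) := fun r => rfl
  have : IsScalarTower k ℝ K := IsScalarTower.of_algebraMap_eq fun _ => rfl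
  set y : Fin n → K := fun i => ψ (fun m => x m i) with hy
  set ξ : Fin (n+1) → K := Fin.cons (ψ (fun m : ℕ => 1 / ((m : ℝ) + 1))) y with hξ
  have heval : ∀ P : MvPolynomial (Fin n) ℝ, aeval y P = ψ (fun m => eval (x m) P) := by
    intro P
    induction P using MvPolynomial.induction_on with
    | C r => simp [hmap]
    | add p q hp hq =>
      rw [map_add, hp, hq, ← map_add]; congr 1; funext m; simp
    | mul_X p i hp =>
      rw [map_mul, hp, aeval_X, hy, ← map_mul]; congr 1; funext m; simp
  set A := Algebra.adjoin k (Set.range ξ) with hA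
  have hyA : ∀ i, y i ∈ A := fun i => Algebra.subset_adjoin ⟨i.succ, by simp [hξ]⟩
  have hcA : ∀ r ∈ k, ψ (fun _ => r) ∈ A := fun r hr => A.algebraMap_mem ⟨r, hr⟩
  obtain ⟨g', hg'⟩ : g ∈ Set.range (MvPolynomial.map (σ := Fin n) (algebraMap k ℝ)) := by
    rw [mem_range_map_iff_coeffs_subset]
    intro c hc
    exact ⟨⟨c, Subfield.subset_closure (Or.inl hc)⟩, rfl⟩
  have hPA : ∀ P : MvPolynomial (Fin n) k,
      ψ (fun m => eval (x m) (MvPolynomial.map (algebraMap k ℝ) P)) ∈ A := by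
    intro P
    rw [← heval, aeval_map_algebraMap]
    have : (aeval y : MvPolynomial (Fin n) k →ₐ[k] K).range ≤ A := by
      rw [← Algebra.adjoin_range_eq_range_aeval]
      apply Algebra.adjoin_le
      rintro _ ⟨j, rfl⟩
      exact hyA j
    exact this ⟨P, rfl⟩
  have hgA : ψ (fun m => eval (x m) g) ∈ A := by rw [← hg']; exact hPA g'
  have hdA : ∀ i, ψ (fun m => eval (x m) (pderiv i g)) ∈ A := fun i => by
    rw [← hg', pderiv_map]; exact hPA _
  have hxA : ∀ i, ψ (fun m => x m i - x0 i) ∈ A := fun i => by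
    have : (fun m => x m i - x0 i) = (fun m => x m i) - (fun _ => x0 i) := rfl
    rw [this, map_sub]
    exact A.sub_mem (hyA i) (hcA _ (Subfield.subset_closure (Or.inr ⟨i, rfl⟩)))
  set D : ℕ → ℝ := fun m => 1 / ((m : ℝ) + 1) - ∑ i, (x m i - x0 i)^2 with hD
  have hDA : ψ D ∈ A := by
    have : D = (fun m : ℕ => 1 / ((m : ℝ) + 1)) - ∑ i, (fun m => x m i - x0 i)^2 := by
      funext m; simp [hD]
    rw [this, map_sub, map_sum]
    refine A.sub_mem (Algebra.subset_adjoin ⟨0, by simp [hξ]⟩) (A.sum_mem fun i _ => ?_)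
    rw [map_pow]
    exact A.pow_mem (hxA i) 2
  have halg : ∀ i, IsAlgebraic A (algebraMap ℝ K (a i)) := by
    intro i
    refine aux_alg A (2 * ψ (fun m => x m i - x0 i) * ψ (fun m => eval (x m) g) -
      ψ (fun m => eval (x m) (pderiv i g)) * ψ D) (ψ (fun m => eval (x m) g) * ψ D) _ ?_ ?_ ?_ ?_
    · exact A.sub_mem (A.mul_mem (A.mul_mem (by exact_mod_cast A.natCast_mem 2) (hxA i)) hgA) (A.mul_mem (hdA i) hDA)
    · exact A.mul_mem hgA hDA
    · exact mul_ne_zero (hψ _ fun m => (hx2 m).ne') (hψ _ fun m => (sub_pos.2 (hx1 m)).ne')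
    · rw [hmap, show (2 : K) = ψ 2 from (map_ofNat ψ 2).symm]
      simp only [← map_mul, ← map_sub]
      congr 1
      funext m
      exact hx3 m i
  refine ⟨RingHom.ker (aeval y : MvPolynomial (Fin n) ℝ →ₐ[ℝ] K), RingHom.ker_isPrime _, ?_, ?_⟩
  · exact aux_dim_le a ha ξ halg _ fun i => ⟨i.succ, by simp [hξ]⟩
  · intro P
    rw [RingHom.mem_ker, heval]

lemma aux_select {n : ℕ} (g : MvPolynomial (Fin n) ℝ) (x0 : Fin n → ℝ) (hg0 : eval x0 g ≤ 0)
    (hacc : ∀ R > 0, ∃ x : Fin n → ℝ, ∑ i, (x i - x0 i)^2 < R ∧ 0 < eval x g) :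
    ∃ I : Ideal (MvPolynomial (Fin n) ℝ), I.IsPrime ∧
      ringKrullDim (MvPolynomial (Fin n) ℝ ⧸ I) = 1 ∧ x0 ∈ realPoints I ∧
      ∃ᶠ x in nhds x0, x ∈ realPoints I ∧ 0 < eval x g := by
  obtain ⟨x, hx, I, hI, hdim, hmem⟩ := aux_field (Filter.Germ (Filter.hyperfilter ℕ : Filter ℕ) ℝ)
    (Filter.Germ.coeRingHom _) g x0 hacc (by
      intro u hu h
      have h' : (u : Filter.Germ (Filter.hyperfilter ℕ : Filter ℕ) ℝ) = ((0 : ℕ → ℝ) : Filter.Germ (Filter.hyperfilter ℕ : Filter ℕ) ℝ) := h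
      rw [Filter.Germ.coe_eq] at h'
      obtain ⟨m, hm⟩ := h'.exists
      exact hu m hm)
  have hmem' : ∀ P ∈ I, ∀ᶠ m in (Filter.hyperfilter ℕ : Filter ℕ), eval (x m) P = 0 := by
    intro P hP
    have h' : ((fun m => eval (x m) P : ℕ → ℝ) : Filter.Germ (Filter.hyperfilter ℕ : Filter ℕ) ℝ) = ((0 : ℕ → ℝ) : Filter.Germ (Filter.hyperfilter ℕ : Filter ℕ) ℝ) := (hmem P).1 hP
    rw [Filter.Germ.coe_eq] at h'
    exact h'
  have hlim : Filter.Tendsto x Filter.atTop (nhds x0) := by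
    rw [tendsto_pi_nhds]
    intro i
    have h1 : Filter.Tendsto (fun m => (x m i - x0 i)^2) Filter.atTop (nhds 0) := by
      refine squeeze_zero (fun m => sq_nonneg _) (fun m => ?_) tendsto_one_div_add_atTop_nhds_zero_nat
      exact (Finset.single_le_sum (f := fun i => (x m i - x0 i)^2) (fun i _ => sq_nonneg _)
          (Finset.mem_univ i)).trans (hx m).1.le
    have h2 : Filter.Tendsto (fun m => x m i - x0 i) Filter.atTop (nhds 0) := by
      have := h1.sqrt
      simp only [Real.sqrt_sq_eq_abs, Real.sqrt_zero] at this
      exact (tendsto_zero_iff_abs_tendsto_zero _).2 this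
    simpa using h2.add_const (x0 i)
  have hlim' : Filter.Tendsto x (Filter.hyperfilter ℕ : Filter ℕ) (nhds x0) :=
    hlim.mono_left (by rw [← Nat.cofinite_eq_atTop]; exact Filter.hyperfilter_le_cofinite)
  have hx0 : x0 ∈ realPoints I := by
    intro P hP
    have h1 : Filter.Tendsto (fun m => eval (x m) P) (Filter.hyperfilter ℕ : Filter ℕ)
        (nhds (eval x0 P)) := ((MvPolynomial.continuous_eval P).tendsto x0).comp hlim'
    have h2 : Filter.Tendsto (fun m => eval (x m) P) (Filter.hyperfilter ℕ : Filter ℕ) (nhds 0) :=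
      tendsto_const_nhds.congr' ((hmem' P hP).mono fun m hm => hm.symm)
    exact tendsto_nhds_unique h1 h2
  have hpts : ∀ᶠ m in (Filter.hyperfilter ℕ : Filter ℕ), x m ∈ realPoints I := by
    obtain ⟨S, hS⟩ := (IsNoetherian.noetherian I : I.FG)
    have h1 : ∀ᶠ m in (Filter.hyperfilter ℕ : Filter ℕ), ∀ P ∈ S, eval (x m) P = 0 := by
      rw [Filter.eventually_all_finset]
      intro P hP
      exact hmem' P (hS ▸ Ideal.subset_span hP)
    filter_upwards [h1] with m hm
    have h2 : I ≤ RingHom.ker (eval (x m)) := by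
      rw [← hS]
      exact Ideal.span_le.2 fun P hP => hm P hP
    intro P hP
    exact h2 hP
  refine ⟨I, hI, ?_, hx0, ?_⟩
  · refine le_antisymm hdim ?_
    by_contra hlt
    have hdom : IsDomain (MvPolynomial (Fin n) ℝ ⧸ I) := inferInstance
    have hle : Ring.KrullDimLE 0 (MvPolynomial (Fin n) ℝ ⧸ I) := by
      rw [Ring.krullDimLE_iff]
      rw [not_le] at hlt
      exact ENat.WithBot.lt_add_one_iff.1 (by simpa using hlt)
    have hfield : IsField (MvPolynomial (Fin n) ℝ ⧸ I) := Ring.KrullDimLE.isField_of_isDomain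
    have hmax : I.IsMaximal := Ideal.Quotient.maximal_of_isField _ hfield
    have hle2 : I ≤ RingHom.ker (eval x0) := fun P hP => hx0 P hP
    have heq := hmax.eq_of_le (RingHom.ker_ne_top _) hle2
    obtain ⟨m, hm⟩ := hpts.exists
    have : x m = x0 := by
      funext i
      have : X i - C (x0 i) ∈ I := by rw [heq, RingHom.mem_ker]; simp
      have := hm _ this
      simpa [sub_eq_zero] using this
    have h3 := (hx m).2
    rw [this] at h3
    exact absurd h3 (not_lt.2 hg0)
  · have : ∀ᶠ m in (Filter.hyperfilter ℕ : Filter ℕ), x m ∈ realPoints I ∧ 0 < eval (x m) g :=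
      hpts.mono fun m hm => ⟨hm, (hx m).2⟩
    exact hlim'.frequently this.frequently


lemma aux_line_ideal {n : ℕ} (x v : Fin n → ℝ) (hv : v ≠ 0) :
    ∃ φ : MvPolynomial (Fin n) ℝ →ₐ[ℝ] Polynomial ℝ,
      (∀ P t, (φ P).eval t = eval (x + t • v) P) ∧
      ringKrullDim (MvPolynomial (Fin n) ℝ ⧸ RingHom.ker φ) = 1 := by
  set φ : MvPolynomial (Fin n) ℝ →ₐ[ℝ] Polynomial ℝ :=
    aeval (fun i => Polynomial.C (x i) + Polynomial.X * Polynomial.C (v i)) with hφ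
  refine ⟨φ, ?_, ?_⟩
  · intro P t
    induction P using MvPolynomial.induction_on with
    | C a => simp [hφ]
    | add p q hp hq => simp [hp, hq]
    | mul_X p i hp => simp [hp]; simp [hφ]; left; ring
  · obtain ⟨i, hi⟩ := Function.ne_iff.1 hv
    have hi' : v i ≠ 0 := hi
    have hsurj : Function.Surjective φ := by
      intro p
      refine ⟨Polynomial.aeval ((X i - C (x i)) * C (v i)⁻¹) p, ?_⟩
      rw [← Polynomial.aeval_algHom_apply]
      have : φ ((X i - C (x i)) * C (v i)⁻¹) = Polynomial.X := by
        simp only [hφ, map_mul, map_sub, aeval_X, MvPolynomial.algHom_C, Polynomial.algebraMap_eq]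
        rw [add_sub_cancel_left, mul_assoc, ← Polynomial.C_mul, mul_inv_cancel₀ hi']
        simp
      rw [this, Polynomial.aeval_X_left_apply]
    refine (ringKrullDim_eq_of_ringEquiv
      (Ideal.quotientKerAlgEquivOfSurjective hsurj).toRingEquiv).trans ?_
    rw [Polynomial.ringKrullDim_of_isNoetherianRing, ringKrullDim_eq_zero_of_field]
    simp

lemma aux_ev (q : Polynomial ℝ) (hq : q ≠ 0) (t : ℝ) :
    ∀ᶠ s in nhdsWithin t {t}ᶜ, q.eval s ≠ 0 := by
  have hfin : {s | q.IsRoot s}.Finite := Polynomial.finite_setOfPred_isRoot hq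
  have h1 := (hfin.subset (Set.sdiff_subset (t := {t}))).isClosed.isOpen_compl.mem_nhds (x := t) (by simp)
  filter_upwards [nhdsWithin_le_nhds h1, self_mem_nhdsWithin] with s hs hs2 h0
  exact hs ⟨h0, hs2⟩

lemma aux_line {n : ℕ} (U : Set (Fin n → ℝ)) (hU : IsOpen U) (f : (Fin n → ℝ) → ℝ)
    (hf : CurveRational U f) (x v : Fin n → ℝ) (hv : v ≠ 0) :
    ContinuousOn (fun t : ℝ => f (x + t • v)) {t | x + t • v ∈ U} ∧
    ∃ p q : Polynomial ℝ, ∀ t : ℝ, x + t • v ∈ U →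
      q.eval t ≠ 0 ∧ q.eval t * f (x + t • v) = p.eval t := by
  obtain ⟨φ, hφ, hdim⟩ := aux_line_ideal x v hv
  obtain ⟨hc, p0, q0, hq0, hpq⟩ := hf (RingHom.ker φ) (RingHom.ker_isPrime _) hdim
  have hmem : ∀ t : ℝ, x + t • v ∈ realPoints (RingHom.ker φ) := by
    intro t P hP
    rw [← hφ, RingHom.mem_ker.1 hP]; simp
  have hcl : Continuous (fun t : ℝ => x + t • v) := by fun_prop
  have hcont : ContinuousOn (fun t : ℝ => f (x + t • v)) {t | x + t • v ∈ U} :=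
    hc.comp hcl.continuousOn fun t ht => ⟨ht, hmem t⟩
  refine ⟨hcont, ?_⟩
  have hq1 : φ q0 ≠ 0 := fun h => hq0 (RingHom.mem_ker.2 h)
  obtain ⟨q, p, d, hcop, hq, hp⟩ : ∃ q p d : Polynomial ℝ, IsCoprime q p ∧
      φ q0 = d * q ∧ φ p0 = d * p := by
    obtain ⟨q, hq⟩ := EuclideanDomain.gcd_dvd_left (φ q0) (φ p0)
    obtain ⟨p, hp⟩ := EuclideanDomain.gcd_dvd_right (φ q0) (φ p0)
    have hab := EuclideanDomain.gcd_eq_gcd_ab (φ q0) (φ p0)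
    set d := EuclideanDomain.gcd (φ q0) (φ p0) with hd
    refine ⟨q, p, d, ⟨EuclideanDomain.gcdA (φ q0) (φ p0), EuclideanDomain.gcdB (φ q0) (φ p0), ?_⟩, hq, hp⟩
    have hd0 : d ≠ 0 := fun h => hq1 (by rw [hq, h, zero_mul])
    apply mul_left_cancel₀ hd0
    set A := EuclideanDomain.gcdA (φ q0) (φ p0)
    set B := EuclideanDomain.gcdB (φ q0) (φ p0)
    rw [hq, hp] at hab
    linear_combination -hab
  have hd0 : ∀ t, (φ q0).eval t ≠ 0 → x + t • v ∈ U → q.eval t * f (x + t • v) = p.eval t := by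
    intro t ht htU
    have h1 := hpq (x + t • v) ⟨htU, hmem t⟩ (by rwa [← hφ])
    rw [← hφ, ← hφ, eq_div_iff ht, hq, hp, Polynomial.eval_mul, Polynomial.eval_mul] at h1
    have h2 : d.eval t ≠ 0 := fun h => ht (by rw [hq, Polynomial.eval_mul, h, zero_mul])
    apply mul_left_cancel₀ h2
    linear_combination h1
  have hall : ∀ t, x + t • v ∈ U → q.eval t * f (x + t • v) = p.eval t := by
    intro t ht
    have hTo : IsOpen {t : ℝ | x + t • v ∈ U} := hU.preimage hcl
    have h1 : Filter.Tendsto (fun t => q.eval t * f (x + t • v)) (nhdsWithin t {t}ᶜ)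
        (nhds (q.eval t * f (x + t • v))) :=
      Filter.Tendsto.mul (q.continuous.continuousAt.tendsto.mono_left nhdsWithin_le_nhds)
        ((hcont.continuousAt (hTo.mem_nhds ht)).tendsto.mono_left nhdsWithin_le_nhds)
    have h2 : Filter.Tendsto (fun t => p.eval t) (nhdsWithin t {t}ᶜ) (nhds (p.eval t)) :=
      p.continuous.continuousAt.tendsto.mono_left nhdsWithin_le_nhds
    have h3 : ∀ᶠ s in nhdsWithin t {t}ᶜ, q.eval s * f (x + s • v) = p.eval s := by
      filter_upwards [aux_ev _ hq1 t, nhdsWithin_le_nhds (hTo.mem_nhds ht)] with s hs hs2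
      exact hd0 s hs hs2
    exact tendsto_nhds_unique (h1.congr' h3) h2
  refine ⟨p, q, fun t ht => ⟨fun h0 => ?_, hall t ht⟩⟩
  obtain ⟨A, B, hAB⟩ := hcop
  have h1 := hall t ht
  rw [h0, zero_mul] at h1
  have h2 := congrArg (Polynomial.eval t) hAB
  simp [h0, ← h1] at h2

lemma aux_linalg {ι β : Type} [Fintype ι] [DecidableEq ι] (v : β → ι → Polynomial ℝ) (A : Set ℝ)
    (hA : A.Infinite)
    (hw : ∀ a ∈ A, ∃ w : ι → ℝ, w ≠ 0 ∧ ∀ b, ∑ i, (v b i).eval a * w i = 0) :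
    ∃ w : ι → Polynomial ℝ, w ≠ 0 ∧ ∀ b, ∑ i, v b i * w i = 0 := by
  let K := FractionRing (Polynomial ℝ)
  let V : β → ι → K := fun b i => algebraMap (Polynomial ℝ) K (v b i)
  by_cases hspan : Submodule.span K (Set.range V) = ⊤
  · exfalso
    obtain ⟨s, hs1, hs2, hs3⟩ := exists_linearIndependent K (Set.range V)
    rw [hspan] at hs2
    let bs := Module.Basis.mk hs3 (by rw [Subtype.range_coe, hs2])
    let e := bs.indexEquiv (Pi.basisFun K ι)
    choose c hc using fun j : ι => hs1 (e.symm j).2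
    have hli : LinearIndependent K (fun j : ι => V (c j)) := by
      have heq : (fun j => V (c j)) = Subtype.val ∘ e.symm := funext hc
      rw [heq]
      exact hs3.comp _ e.symm.injective
    have hunit : IsUnit (Matrix.of (fun j : ι => V (c j))) :=
      Matrix.linearIndependent_rows_iff_isUnit.1 hli
    set M : Matrix ι ι (Polynomial ℝ) := Matrix.of fun j => v (c j) with hM
    have hdet : M.det = 0 := by
      apply Polynomial.eq_zero_of_infinite_isRoot
      refine hA.mono fun a ha => ?_
      obtain ⟨w, hw0, hw1⟩ := hw a ha
      have : ((Polynomial.evalRingHom a).mapMatrix M).det = 0 := by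
        rw [← Matrix.exists_mulVec_eq_zero_iff]
        refine ⟨w, hw0, ?_⟩
        funext j
        simpa [Matrix.mulVec, dotProduct, hM] using hw1 (c j)
      rw [← RingHom.map_det] at this
      exact this
    have h2 : (Matrix.of (fun j : ι => V (c j))) = (algebraMap (Polynomial ℝ) K).mapMatrix M := by
      ext i j; simp [hM, V]
    rw [h2, Matrix.isUnit_iff_isUnit_det, ← RingHom.map_det, hdet, map_zero] at hunit
    exact not_isUnit_zero hunit
  · obtain ⟨ψ, hψ, hle⟩ := Submodule.exists_le_ker_of_lt_top _ (lt_top_iff_ne_top.2 hspan)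
    obtain ⟨⟨d, hd⟩, hint⟩ := IsLocalization.exist_integer_multiples_of_finite
      (nonZeroDivisors (Polynomial ℝ)) (fun i : ι => ψ (Pi.single i 1))
    choose w hw' using hint
    have hd0 : d ≠ 0 := nonZeroDivisors.ne_zero hd
    have hinj : Function.Injective (algebraMap (Polynomial ℝ) K) := IsFractionRing.injective _ _
    have hψe : ∀ u : ι → K, ψ u = ∑ i, u i * ψ (Pi.single i 1) := by
      intro u
      conv_lhs => rw [← (Pi.basisFun K ι).sum_repr u]
      simp
    refine ⟨w, ?_, ?_⟩
    · intro h0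
      apply hψ
      refine LinearMap.ext fun u => ?_
      rw [hψe, LinearMap.zero_apply]
      refine Finset.sum_eq_zero fun i _ => ?_
      have := hw' i
      rw [h0, Pi.zero_apply, map_zero] at this
      have h3 : algebraMap (Polynomial ℝ) K d * ψ (Pi.single i 1) = 0 := by
        rw [← Algebra.smul_def]; exact this.symm
      rcases mul_eq_zero.1 h3 with h | h
      · exact absurd (hinj (h.trans (map_zero _).symm)) hd0
      · rw [h, mul_zero]
    · intro b
      apply hinj
      rw [map_zero, map_sum]
      have h1 : ψ (V b) = 0 := hle (Submodule.subset_span ⟨b, rfl⟩)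
      rw [hψe] at h1
      have : ∀ i, algebraMap (Polynomial ℝ) K (v b i * w i) =
          algebraMap (Polynomial ℝ) K d * (V b i * ψ (Pi.single i 1)) := by
        intro i
        rw [map_mul, hw' i]
        simp only [Algebra.smul_def, Submonoid.smul_def]
        ring
      simp_rw [this]
      rw [← Finset.mul_sum, h1, mul_zero]


lemma aux_pigeon {γ : Type} [Countable γ] (A : Set ℝ) (hA : ¬ A.Countable) (s : ℝ → γ) :
    ∃ c, {a ∈ A | s a = c}.Infinite := by
  by_contra! h
  apply hA
  have : A ⊆ ⋃ c, {a ∈ A | s a = c} := fun a ha => Set.mem_iUnion.2 ⟨s a, ha, rfl⟩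
  refine (Set.countable_iUnion fun c => ?_).mono this
  exact (Set.not_infinite.1 (by simpa using h c)).countable

lemma aux_eval_sum {n : ℕ} (S : Finset (Fin n →₀ ℕ)) (P : MvPolynomial (Fin n) ℝ)
    (hP : P.support ⊆ S) (b : Fin n → ℝ) :
    eval b P = ∑ m : S, P.coeff m * eval b (monomial m.1 (1:ℝ)) := by
  rw [Finset.sum_coe_sort S (fun m => P.coeff m * eval b (monomial m (1:ℝ)))]
  conv_lhs => rw [P.as_sum, map_sum]
  rw [Finset.sum_subset hP]
  · refine Finset.sum_congr rfl fun m _ => ?_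
    simp [eval_monomial]
  · intro m _ hm
    simp [notMem_support_iff.1 hm]

lemma aux_box (n : ℕ) : ∀ (A : Fin n → Set ℝ) (_ : ∀ i, ¬ (A i).Countable)
    (f : (Fin n → ℝ) → ℝ)
    (_ : ∀ x ∈ Set.pi Set.univ A, ∀ i, ∃ p q : Polynomial ℝ, ∀ t ∈ A i,
      q.eval t ≠ 0 ∧ q.eval t * f (Function.update x i t) = p.eval t),
    ∃ P Q : MvPolynomial (Fin n) ℝ, Q ≠ 0 ∧ ∀ x ∈ Set.pi Set.univ A,
      eval x Q * f x = eval x P := by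
  induction n with
  | zero =>
    intro A _ f _
    refine ⟨C (f default), 1, one_ne_zero, fun x _ => ?_⟩
    rw [Subsingleton.elim x default]; simp
  | succ n ih =>
    intro A hA f hf
    have hinf : ∀ i, (A i).Infinite := fun i h => hA i h.countable
    let B : Fin n → Set ℝ := fun i => A i.succ
    have hcons : ∀ a ∈ A 0, ∀ b ∈ Set.pi Set.univ B, (Fin.cons a b : Fin (n+1) → ℝ) ∈ Set.pi Set.univ A := by
      intro a ha b hb i _
      refine Fin.cases ?_ (fun j => ?_) i
      · simpa using ha
      · simpa using hb j trivial
    have h1 : ∀ a, ∃ P Q : MvPolynomial (Fin n) ℝ, a ∈ A 0 → Q ≠ 0 ∧ ∀ b ∈ Set.pi Set.univ B,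
        eval b Q * f (Fin.cons a b) = eval b P := by
      intro a
      by_cases ha : a ∈ A 0
      · obtain ⟨P, Q, h⟩ := ih B (fun i => hA _) (fun b => f (Fin.cons a b)) (by
          intro b hb i
          obtain ⟨p, q, h⟩ := hf _ (hcons a ha b hb) i.succ
          refine ⟨p, q, fun t ht => ?_⟩
          have := h t ht
          rwa [← Fin.cons_update] at this)
        exact ⟨P, Q, fun _ => h⟩
      · exact ⟨0, 0, fun h => absurd h ha⟩
    choose Pa Qa hPQ using h1
    obtain ⟨S, hS⟩ := aux_pigeon (A 0) (hA 0) (fun a => (Pa a).support ∪ (Qa a).support)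
    have h2 : ∀ b : Set.pi Set.univ B, ∃ p q : Polynomial ℝ, ∀ t ∈ A 0,
        q.eval t ≠ 0 ∧ q.eval t * f (Fin.cons t b.1) = p.eval t := by
      intro b
      obtain ⟨a, ha⟩ := (hinf 0).nonempty
      obtain ⟨p, q, h⟩ := hf _ (hcons a ha b.1 b.2) 0
      refine ⟨p, q, fun t ht => ?_⟩
      have := h t ht
      rwa [Fin.update_cons_zero] at this
    choose p q hpq using h2
    let mon : (Fin n → ℝ) → S → ℝ := fun b m => eval b (monomial m.1 (1:ℝ))
    obtain ⟨w, hw0, hw⟩ := aux_linalg (ι := S ⊕ S) (β := Set.pi Set.univ B)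
      (fun b => Sum.elim (fun m => - q b * Polynomial.C (mon b.1 m)) (fun m => p b * Polynomial.C (mon b.1 m)))
      _ hS (by
        rintro a ⟨ha, hSa⟩
        have hs1 : (Pa a).support ⊆ S := hSa ▸ Finset.subset_union_left
        have hs2 : (Qa a).support ⊆ S := hSa ▸ Finset.subset_union_right
        refine ⟨Sum.elim (fun m => (Pa a).coeff m) (fun m => (Qa a).coeff m), ?_, ?_⟩
        · intro h0
          apply (hPQ a ha).1
          ext m
          by_cases hm : m ∈ S
          · simpa using congrFun h0 (Sum.inr ⟨m, hm⟩)
          · rw [notMem_support_iff.1 (fun h => hm (hs2 h)), coeff_zero]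
        · intro b
          have e1 := aux_eval_sum S _ hs1 b.1
          have e2 := aux_eval_sum S _ hs2 b.1
          have e3 := (hPQ a ha).2 b.1 b.2
          obtain ⟨e4, e5⟩ := hpq b a ha
          have : ∑ i : S ⊕ S, ((Sum.elim (fun m => - q b * Polynomial.C (mon b.1 m)) (fun m => p b * Polynomial.C (mon b.1 m)) : S ⊕ S → Polynomial ℝ) i).eval a *
              (Sum.elim (fun m : S => (Pa a).coeff m) (fun m : S => (Qa a).coeff m) : S ⊕ S → ℝ) i
              = -(q b).eval a * eval b.1 (Pa a) + (p b).eval a * eval b.1 (Qa a) := by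
            rw [Fintype.sum_sum_type, e1, e2, Finset.mul_sum, Finset.mul_sum]
            congr 1
            · refine Finset.sum_congr rfl fun m _ => ?_
              simp only [Sum.elim_inl, Polynomial.eval_mul, Polynomial.eval_neg, Polynomial.eval_C, mon]
              ring
            · refine Finset.sum_congr rfl fun m _ => ?_
              simp only [Sum.elim_inr, Polynomial.eval_mul, Polynomial.eval_C, mon]
              ring
          rw [this, ← e3, ← e5]; ring)
    let G : (S → Polynomial ℝ) → MvPolynomial (Fin (n+1)) ℝ := fun u =>
      ∑ m : S, Polynomial.aeval (X 0) (u m) * rename Fin.succ (monomial m.1 (1:ℝ))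
    have hG : ∀ u a b, eval (Fin.cons a b : Fin (n+1) → ℝ) (G u) = ∑ m : S, (u m).eval a * mon b m := by
      intro u a b
      simp only [G, map_sum, map_mul]
      refine Finset.sum_congr rfl fun m _ => ?_
      congr 1
      · have : (eval (Fin.cons a b : Fin (n+1) → ℝ)) = (aeval (Fin.cons a b : Fin (n+1) → ℝ) : MvPolynomial (Fin (n+1)) ℝ →ₐ[ℝ] ℝ).toRingHom := by
          ext <;> simp
        rw [this]
        change (aeval (Fin.cons a b : Fin (n+1) → ℝ) : MvPolynomial (Fin (n+1)) ℝ →ₐ[ℝ] ℝ) _ = _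
        rw [← Polynomial.aeval_algHom_apply]
        simp [Polynomial.aeval_def, Polynomial.eval₂_eq_eval_map]
      · rw [eval_rename]; rfl
    have hGz : ∀ u, (∀ a ∈ A 0, ∀ b ∈ Set.pi Set.univ B, eval (Fin.cons a b : Fin (n+1) → ℝ) (G u) = 0) → u = 0 := by
      intro u hu
      funext m
      apply Polynomial.eq_zero_of_infinite_isRoot
      refine (hinf 0).mono fun a ha => ?_
      have h0 : (∑ m : S, monomial m.1 ((u m).eval a) : MvPolynomial (Fin n) ℝ) = 0 := by
        refine MvPolynomial.funext_set B (fun i => hinf _) fun b hb => ?_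
        have := hu a ha b hb
        rw [hG] at this
        rw [map_zero, ← this, map_sum]
        refine Finset.sum_congr rfl fun m _ => ?_
        simp [mon, eval_monomial]
      have h3 := congrArg (coeff m.1) h0
      rw [coeff_sum, coeff_zero] at h3
      simp only [coeff_monomial] at h3
      rw [Finset.sum_eq_single m] at h3
      · simpa using h3
      · intro m' _ hm'
        rw [if_neg]
        exact fun h => hm' (Subtype.ext h)
      · simp
    have hkey : ∀ a ∈ A 0, ∀ b ∈ Set.pi Set.univ B,
        eval (Fin.cons a b : Fin (n+1) → ℝ) (G fun m => w (Sum.inr m)) * f (Fin.cons a b) =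
        eval (Fin.cons a b : Fin (n+1) → ℝ) (G fun m => w (Sum.inl m)) := by
      intro a ha b hb
      obtain ⟨e4, e5⟩ := hpq ⟨b, hb⟩ a ha
      have h3 := congrArg (Polynomial.eval a) (hw ⟨b, hb⟩)
      rw [Fintype.sum_sum_type] at h3
      simp only [Sum.elim_inl, Sum.elim_inr, Polynomial.eval_add, Polynomial.eval_finsetSum, Polynomial.eval_mul, Polynomial.eval_neg, Polynomial.eval_C, Polynomial.eval_zero] at h3
      have h4 : -(q ⟨b, hb⟩).eval a * eval (Fin.cons a b : Fin (n+1) → ℝ) (G fun m => w (Sum.inl m)) +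
        (p ⟨b, hb⟩).eval a * eval (Fin.cons a b : Fin (n+1) → ℝ) (G fun m => w (Sum.inr m)) = 0 := by
        rw [hG, hG, Finset.mul_sum, Finset.mul_sum, ← h3]
        congr 1 <;> exact Finset.sum_congr rfl fun m _ => by ring
      rw [← e5] at h4
      apply mul_left_cancel₀ e4
      linear_combination h4
    refine ⟨G fun m => w (Sum.inl m), G fun m => w (Sum.inr m), ?_, ?_⟩
    · intro h0
      rw [h0] at hkey
      have hl := hGz (fun m => w (Sum.inl m)) fun a ha b hb => by rw [← hkey a ha b hb]; simp
      have hr := hGz (fun m => w (Sum.inr m)) fun a ha b hb => by rw [h0]; simp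
      apply hw0
      funext i
      rcases i with m | m
      · exact congrFun hl m
      · exact congrFun hr m
    · intro x hx
      have := hkey (x 0) (hx 0 trivial) (Fin.tail x) (fun i _ => hx i.succ trivial)
      rwa [Fin.cons_self_tail] at this


lemma aux_global {n : ℕ} (U : Set (Fin n → ℝ)) (hU : IsOpen U) (hne : U.Nonempty)
    (f : (Fin n → ℝ) → ℝ) (hf : CurveRational U f) :
    ∃ P Q : MvPolynomial (Fin n) ℝ, Q ≠ 0 ∧ ∀ x ∈ U, eval x Q * f x = eval x P := by
  obtain ⟨x0, hx0⟩ := hne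
  obtain ⟨r, hr, hball⟩ := Metric.isOpen_iff.1 hU x0 hx0
  let A : Fin n → Set ℝ := fun i => Metric.ball (x0 i) r
  have hAball : Set.pi Set.univ A = Metric.ball x0 r := (ball_pi x0 hr).symm
  have hAU : Set.pi Set.univ A ⊆ U := hAball ▸ hball
  have hAc : ∀ i, ¬ (A i).Countable := by
    intro i h
    have h2 : A i = Set.Ioo (x0 i - r) (x0 i + r) := Real.ball_eq_Ioo _ _
    rw [h2] at h
    exact Cardinal.Real.Ioo_countable_iff.1 h |>.not_gt (by linarith)
  have hAinf : ∀ i, (A i).Infinite := fun i h => hAc i h.countable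
  obtain ⟨P, Q, hQ, hPQ⟩ := aux_box n A hAc f (by
    intro x hx i
    have hv : (Pi.single i 1 : Fin n → ℝ) ≠ 0 := by simp
    obtain ⟨-, p, q, h⟩ := aux_line U hU f hf (Function.update x i 0) (Pi.single i 1) hv
    have hup : ∀ t : ℝ, Function.update x i 0 + t • (Pi.single i 1 : Fin n → ℝ) = Function.update x i t := by
      intro t
      funext j
      by_cases hj : j = i
      · subst hj; simp
      · simp [hj]
    refine ⟨p, q, fun t ht => ?_⟩
    have := h t
    rw [hup] at this
    apply this
    apply hAU
    intro j _
    by_cases hj : j = i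
    · subst hj; simpa using ht
    · simpa [hj] using hx j trivial)
  refine ⟨P, Q, hQ, fun x hx => ?_⟩
  obtain ⟨c, hcA, hc⟩ : ∃ c ∈ Set.pi Set.univ A, eval c Q ≠ 0 := by
    by_contra! h
    exact hQ (MvPolynomial.funext_set A hAinf fun c hc => by rw [h c hc, map_zero])
  by_cases hxc : x - c = 0
  · rw [sub_eq_zero.1 hxc]; exact hPQ c hcA
  obtain ⟨φ, hφ, -⟩ := aux_line_ideal c (x - c) hxc
  obtain ⟨-, p, q, h⟩ := aux_line U hU f hf c (x - c) hxc
  have hcl : Continuous (fun t : ℝ => c + t • (x - c)) := by fun_prop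
  have hpoly : q * φ P = p * φ Q := by
    apply Polynomial.eq_of_infinite_eval_eq
    have hopen : IsOpen {t : ℝ | c + t • (x - c) ∈ Set.pi Set.univ A} := by
      rw [hAball]; exact Metric.isOpen_ball.preimage hcl
    have : {t : ℝ | c + t • (x - c) ∈ Set.pi Set.univ A}.Infinite :=
      infinite_of_mem_nhds 0 (hopen.mem_nhds (by simpa using hcA))
    refine this.mono fun t ht => ?_
    have h1 := hPQ _ ht
    obtain ⟨h2, h3⟩ := h t (hAU ht)
    show (q * φ P).eval t = (p * φ Q).eval t
    rw [Polynomial.eval_mul, Polynomial.eval_mul, hφ, hφ, ← h1, ← h3]; ring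
  have h1 : c + (1:ℝ) • (x - c) = x := by simp
  have h2 := congrArg (Polynomial.eval 1) hpoly
  have h3 := h 1
  rw [Polynomial.eval_mul, Polynomial.eval_mul, hφ, hφ, h1] at h2
  rw [h1] at h3
  obtain ⟨h4, h5⟩ := h3 hx
  apply mul_left_cancel₀ h4
  linear_combination eval x Q * h5 - h2

lemma aux_perturb {n : ℕ} (U : Set (Fin n → ℝ)) (hU : IsOpen U)
    (f : (Fin n → ℝ) → ℝ) (hf : CurveRational U f) (Q : MvPolynomial (Fin n) ℝ) (hQ : Q ≠ 0)
    (x : Fin n → ℝ) (hx : x ∈ U) (N : Set (Fin n → ℝ)) (hN : N ∈ nhds x)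
    (O : Set ℝ) (hO : O ∈ nhds (f x)) :
    ∃ y ∈ U ∩ N, eval y Q ≠ 0 ∧ f y ∈ O := by
  by_cases hq : eval x Q = 0
  swap
  · exact ⟨x, ⟨hx, mem_of_mem_nhds hN⟩, hq, mem_of_mem_nhds hO⟩
  obtain ⟨z, hz⟩ : ∃ z, eval z Q ≠ 0 := by
    by_contra! h
    exact hQ (MvPolynomial.funext fun c => by rw [h c, map_zero])
  have hzx : z - x ≠ 0 := fun h => hz (by rw [sub_eq_zero.1 h, hq])
  obtain ⟨φ, hφ, -⟩ := aux_line_ideal x (z - x) hzx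
  obtain ⟨hc, -⟩ := aux_line U hU f hf x (z - x) hzx
  have hcl : Continuous (fun t : ℝ => x + t • (z - x)) := by fun_prop
  have hφQ : φ Q ≠ 0 := by
    intro h
    have := hφ Q 1
    rw [h] at this
    apply hz
    simpa using this.symm
  have e0 : x + (0:ℝ) • (z - x) = x := by simp
  have hUo : {t : ℝ | x + t • (z - x) ∈ U} ∈ nhds (0:ℝ) :=
    (hU.preimage hcl).mem_nhds (by simpa using hx)
  have hN' : ∀ᶠ t in nhds (0:ℝ), x + t • (z - x) ∈ N := by
    apply hcl.continuousAt.eventually_mem; simpa only [e0] using hN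
  have hO' : ∀ᶠ t in nhds (0:ℝ), f (x + t • (z - x)) ∈ O := by
    apply (hc.continuousAt hUo).eventually_mem; simpa only [e0] using hO
  have hall : ∀ᶠ t in nhdsWithin (0:ℝ) {0}ᶜ, x + t • (z - x) ∈ U ∧ x + t • (z - x) ∈ N ∧
      f (x + t • (z - x)) ∈ O ∧ (φ Q).eval t ≠ 0 := by
    filter_upwards [nhdsWithin_le_nhds hUo, nhdsWithin_le_nhds hN', nhdsWithin_le_nhds hO',
      aux_ev _ hφQ 0] with t a b c d
    exact ⟨a, b, c, d⟩
  obtain ⟨t, a, b, c, d⟩ := hall.exists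
  exact ⟨_, ⟨a, b⟩, by rwa [← hφ], c⟩

/-- **Theorem 1.7** (main implication, for open subsets of `ℝⁿ`). A curve-rational
function on a nonempty open set `U ⊆ ℝⁿ` is continuous and rational. -/
theorem continuous_and_rational_of_curveRational
    (n : ℕ) (U : Set (Fin n → ℝ)) (hU : IsOpen U) (hne : U.Nonempty)
    (f : (Fin n → ℝ) → ℝ) (hf : CurveRational U f) :
    ContinuousOn f U ∧
    ∃ p q : MvPolynomial (Fin n) ℝ, q ≠ 0 ∧
      ∀ x ∈ U, eval x q ≠ 0 → f x = eval x p / eval x q := by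
  obtain ⟨P, Q, hQ, hPQ⟩ := aux_global U hU hne f hf
  refine ⟨?_, P, Q, hQ, fun x hx hq => by rw [eq_div_iff hq, mul_comm]; exact hPQ x hx⟩
  intro x0 hx0
  by_contra hcon
  rw [ContinuousWithinAt, Metric.tendsto_nhds] at hcon
  push Not at hcon
  obtain ⟨ε, hε, hfr⟩ := hcon
  have hfr' : ∃ᶠ x in nhdsWithin x0 U, ε / 2 < |f x - f x0| := by
    refine hfr.mono fun x hx => ?_
    rw [Real.dist_eq] at hx
    linarith
  set c := f x0 with hc
  set δ := ε / 2 with hδ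
  have hδ0 : 0 < δ := by positivity
  obtain ⟨I, hI, hdim, hxI, hfreq⟩ := aux_select ((P - C c * Q)^2 - C (δ^2) * Q^2) x0 (by
      simp only [map_sub, map_pow, map_mul, eval_C]
      rw [← hPQ x0 hx0]
      nlinarith [sq_nonneg (δ * eval x0 Q)]) (by
    intro R hR
    have hopen : IsOpen {x : Fin n → ℝ | ∑ i, (x i - x0 i)^2 < R} :=
      isOpen_lt (by fun_prop) continuous_const
    have hmem : {x : Fin n → ℝ | ∑ i, (x i - x0 i)^2 < R} ∈ nhds x0 :=
      hopen.mem_nhds (by simpa using hR)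
    obtain ⟨x, hx1, hx2, hx3⟩ := (hfr'.and_eventually
      (Filter.Eventually.and (nhdsWithin_le_nhds hmem) self_mem_nhdsWithin)).exists
    have hO : {s : ℝ | δ < |s - c|} ∈ nhds (f x) :=
      (isOpen_lt continuous_const (by fun_prop)).mem_nhds hx1
    obtain ⟨y, ⟨hy1, hy2⟩, hy3, hy4⟩ := aux_perturb U hU f hf Q hQ x hx3 _ (hopen.mem_nhds hx2) _ hO
    refine ⟨y, hy2, ?_⟩
    simp only [map_sub, map_pow, map_mul, eval_C]
    rw [← hPQ y hy1]
    have h1 : δ ^ 2 < (f y - c)^2 := by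
      rw [← sq_abs (f y - c)]
      exact pow_lt_pow_left₀ hy4 hδ0.le two_ne_zero
    have h2 : 0 < (eval y Q)^2 := by positivity
    nlinarith [mul_pos h2 (sub_pos.2 h1)])
  obtain ⟨hcont, -⟩ := hf I hI hdim
  have h1 := hcont x0 ⟨hx0, hxI⟩
  rw [ContinuousWithinAt, Metric.tendsto_nhds] at h1
  have h2 := h1 δ hδ0
  rw [eventually_nhdsWithin_iff] at h2
  obtain ⟨x, ⟨hxZ, hxg⟩, hx1, hxU⟩ := (hfreq.and_eventually (h2.and (hU.mem_nhds hx0))).exists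
  have h3 := hx1 ⟨hxU, hxZ⟩
  rw [Real.dist_eq] at h3
  simp only [map_sub, map_pow, map_mul, eval_C] at hxg
  rw [← hPQ x hxU] at hxg
  have h4 : (f x - c)^2 < δ ^ 2 := by
    rw [← sq_abs (f x - c)]
    exact pow_lt_pow_left₀ h3 (abs_nonneg _) two_ne_zero
  nlinarith [mul_nonneg (sq_nonneg (eval x Q)) (sub_nonneg.2 h4.le)]
end

section
/- Let U ⊆ ℝ^n be a nonempty connected open set and let f : U → ℝ be arc-rational. Then f is continuous on U, f is rational (there exist real polynomials p, q in n variables, q not the zero polynomial, with f(x) = p(x)/q(x) for every x ∈ U with q(x) ≠ 0), and moreover for every prime ideal I of ℝ[X₁,…,X_n] with Krull dimension of ℝ[X₁,…,X_n]/I equal to 1 there exist polynomials p', q' with q' ∉ I such that f(x) = p'(x)/q'(x) for every x ∈ U ∩ Z(I) with q'(x) ≠ 0. (Theorem 1.10 for open subsets of ℝ^n.) -/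
open MvPolynomial

/-- `f : W → ℝ` is arc-rational: for every `x ∈ W` and every irreducible real algebraic
curve through `x` (encoded by a prime ideal `I` with one-dimensional quotient and
`x ∈ Z(I)`), there is an open neighborhood `U_x` of `x` in `W` such that the restriction
of `f` to `U_x ∩ Z(I)` is continuous and rational on the curve. -/
def ArcRational {n : ℕ} (W : Set (Fin n → ℝ)) (f : (Fin n → ℝ) → ℝ) : Prop :=
  ∀ x ∈ W, ∀ I : Ideal (MvPolynomial (Fin n) ℝ), I.IsPrime →
    ringKrullDim (MvPolynomial (Fin n) ℝ ⧸ I) = 1 → x ∈ realPoints I →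
    ∃ Ux : Set (Fin n → ℝ), IsOpen Ux ∧ x ∈ Ux ∧ Ux ⊆ W ∧
      ContinuousOn f (Ux ∩ realPoints I) ∧
      ∃ p q : MvPolynomial (Fin n) ℝ, q ∉ I ∧
        ∀ y ∈ Ux ∩ realPoints I, eval y q ≠ 0 → f y = eval y p / eval y q

theorem ar_dim {A : Type} [CommRing A] [IsDomain A] [Algebra ℝ A] [Algebra.FiniteType ℝ A] (g : A)
    (hg : Transcendental ℝ g) (h : ∀ x : A, IsAlgebraic (Algebra.adjoin ℝ {g}) x) :
    ringKrullDim A = 1 := by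
  have : Algebra.IsAlgebraic (Algebra.adjoin ℝ {g}) A := ⟨h⟩
  have htr : Algebra.trdeg ℝ A ≤ 1 := by
    simpa using Algebra.IsAlgebraic.trdeg_le_cardinalMk ℝ (A := A) {g}
  obtain ⟨s, φ, hinj, hint⟩ := exists_integral_inj_algHom_of_fg ℝ A
  have hs : s ≤ 1 := by
    have h1 : AlgebraicIndependent ℝ (fun i : Fin s => φ (X i)) := by
      have := (MvPolynomial.algebraicIndependent_X (Fin s) ℝ).map' (f := φ) hinj
      exact this
    have h2 := h1.lift_cardinalMk_le_trdeg
    simp at h2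
    have h3 := h2.trans htr
    exact_mod_cast h3
  have hs1 : s = 1 := by
    rcases Nat.lt_or_ge s 1 with h0 | h0
    · exfalso
      have : s = 0 := by omega
      subst this
      apply hg
      have hi : IsIntegral ℝ g := by
        obtain ⟨p, hp, hp2⟩ := hint g
        refine ⟨p.map (MvPolynomial.isEmptyAlgEquiv ℝ (Fin 0)).toRingEquiv.toRingHom, hp.map _, ?_⟩
        rw [Polynomial.eval₂_map]
        rw [← hp2]
        congr 1
        refine RingHom.ext fun x => ?_
        obtain ⟨r, rfl⟩ := (MvPolynomial.isEmptyAlgEquiv ℝ (Fin 0)).symm.surjective x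
        simp
        exact MvPolynomial.coeff_zero_C _
      exact hi.isAlgebraic
    · omega
  subst hs1
  have hd : ringKrullDim (MvPolynomial (Fin 1) ℝ) = 1 := by
    rw [MvPolynomial.ringKrullDim_of_isNoetherianRing, ringKrullDim_eq_zero_of_field]; simp
  let _ := φ.toRingHom.toAlgebra
  have hI : Algebra.IsIntegral (MvPolynomial (Fin 1) ℝ) A := ⟨hint⟩
  have hle : Ring.KrullDimLE 1 (MvPolynomial (Fin 1) ℝ) := Ring.krullDimLE_iff.2 (by rw [hd]; rfl)
  have hA1 : Ring.KrullDimLE 1 A := by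
    have : (⊥ : Ideal A).IsPrime := Ideal.isPrime_bot
    rw [Ring.krullDimLE_one_iff_of_isPrime_bot]
    intro I hI0 hIp
    have := Ring.krullDimLE_one_iff_of_isPrime_bot.1 hle
    obtain ⟨x, hx, hx0⟩ := Submodule.exists_mem_ne_zero_of_ne_bot hI0
    exact Ideal.isMaximal_of_isIntegral_of_isMaximal_comap (R := MvPolynomial (Fin 1) ℝ) I
      (this _ (Ideal.comap_ne_bot_of_integral_mem hx0 hx (hint x)) inferInstance)
  refine le_antisymm (Ring.krullDimLE_iff.1 hA1) (not_lt.1 fun hlt => ?_)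
  have h0 : Ring.KrullDimLE 0 A := Ring.krullDimLE_iff.mpr (ENat.WithBot.lt_add_one_iff.mp hlt)
  have hF : IsField A := Ring.KrullDimLE.isField_of_isDomain
  have hF1 : IsField (MvPolynomial (Fin 1) ℝ) := isField_of_isIntegral_of_isField hinj hF
  let _ := hF1.toField
  have := ringKrullDim_eq_zero_of_field (MvPolynomial (Fin 1) ℝ)
  rw [hd] at this
  exact one_ne_zero this

open scoped IntermediateField.algebraAdjoinAdjoin in
theorem ar_der {k K : Type} [Field k] [CharZero k] [Field K] [Algebra k K] [Algebra.EssFiniteType k K]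
    (y : Option Unit → K) (hy : AlgebraicIndependent k y) :
    ∃ d : Derivation k K K, d (y none) = 0 ∧ d (y (some ())) ≠ 0 := by
  obtain ⟨B, hB, hB2⟩ := exists_isTranscendenceBasis_superset hy.coe_range
  have hne : y none ≠ y (some ()) := fun h => by simpa using hy.injective h
  have hBr : y none ∈ B := hB ⟨_, rfl⟩
  have hBg : y (some ()) ∈ B := hB ⟨_, rfl⟩
  generalize y none = r at *
  generalize y (some ()) = g at *
  let L := IntermediateField.adjoin k (B \ {g})
  let F := IntermediateField.adjoin k B
  have hgL : Transcendental L g := by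
    have h1 := hB2.1.transcendental_adjoin (s := {x : B | x.1 ≠ g}) (i := ⟨g, hBg⟩) (by simp)
    have h2 : (Subtype.val '' {x : B | x.1 ≠ g}) = B \ {g} := by
      ext x; simp [and_comm]
    rw [h2] at h1
    intro h
    exact h1 ((IsFractionRing.isAlgebraic_iff (Algebra.adjoin k (B \ {g})) L K).2 h)
  have hFalg : Algebra.IsAlgebraic F K := by
    have := hB2.isAlgebraic_field
    rwa [Subtype.range_coe] at this
  have : Algebra.EssFiniteType L K := Algebra.EssFiniteType.of_comp k L K
  have hnu : ¬ Subsingleton (Ω[K⁄L]) := by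
    rw [← Algebra.formallyUnramified_iff, Algebra.FormallyUnramified.iff_isSeparable]
    intro h
    exact hgL (Algebra.IsAlgebraic.isAlgebraic g)
  have hnt : Nontrivial (Ω[K⁄L]) := not_subsingleton_iff_nontrivial.1 hnu
  obtain ⟨ω, hω⟩ := exists_ne (0 : Ω[K⁄L])
  obtain ⟨l, hl⟩ : ∃ l : Module.Dual K (Ω[K⁄L]), l ω ≠ 0 := by
    by_contra! h
    exact hω ((Module.forall_dual_apply_eq_zero_iff K ω).1 h)
  let d : Derivation L K K := KaehlerDifferential.linearMapEquivDerivation L K l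
  have hd : d ≠ 0 := by
    intro h
    have : l = 0 := (KaehlerDifferential.linearMapEquivDerivation L K).map_eq_zero_iff.1 h
    simp [this] at hl
  refine ⟨d.restrictScalars k, ?_, ?_⟩
  · have hrL : r ∈ L := IntermediateField.subset_adjoin _ _ ⟨hBr, hne⟩
    exact d.map_algebraMap ⟨r, hrL⟩
  · intro hdg
    have hdg : d g = 0 := hdg
    apply hd
    have hF : ∀ x ∈ F, d x = 0 := by
      intro x hx
      induction hx using IntermediateField.adjoin_induction with
      | mem x hx =>
        by_cases hxg : x = g
        · rw [hxg, hdg]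
        · exact d.map_algebraMap ⟨x, IntermediateField.subset_adjoin _ _ ⟨hx, hxg⟩⟩
      | algebraMap x => exact (d.restrictScalars k).map_algebraMap x
      | add x y _ _ hx hy => simp [hx, hy]
      | mul x y _ _ hx hy => simp [hx, hy]
      | inv x _ hx => simp [Derivation.leibniz_inv, hx]
    let d' : Derivation F K K := Derivation.mk'
      { toFun := d
        map_add' := by simp
        map_smul' := by
          intro a x
          have : a • x = (a : K) * x := rfl
          rw [this, d.leibniz, hF a a.2]
          simp; rfl } (by intro a b; simp)
    have hu : Algebra.FormallyUnramified F K := Algebra.FormallyUnramified.of_isSeparable F K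
    have hs : Subsingleton (Ω[K⁄F]) := (Algebra.formallyUnramified_iff _ _).1 hu
    ext x
    have h1 : d x = d' x := rfl
    rw [h1, ← Derivation.liftKaehlerDifferential_comp_D d' x, Subsingleton.elim (KaehlerDifferential.D F K x) 0]
    simp

theorem ar_isClosed_realPoints {n : ℕ} (I : Ideal (MvPolynomial (Fin n) ℝ)) :
    IsClosed (realPoints I) := by
  have : realPoints I = ⋂ P ∈ I, {x | eval x P = 0} := by
    ext x; simp [realPoints]
  rw [this]
  exact isClosed_biInter fun P _ => isClosed_eq (MvPolynomial.continuous_eval P) continuous_const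

theorem ar_chain {n : ℕ} (v : Fin n → MvPolynomial (Fin n) ℝ) (γ : ℝ → Fin n → ℝ) (t : ℝ)
    (h : HasDerivAt γ (fun i => eval (γ t) (v i)) t) (P : MvPolynomial (Fin n) ℝ) :
    HasDerivAt (fun s => eval (γ s) P) (eval (γ t) (mkDerivation ℝ v P)) t := by
  induction P using MvPolynomial.induction_on with
  | C a => simpa using hasDerivAt_const t a
  | add p q hp hq => simp only [map_add]; exact hp.add hq
  | mul_X p i hp =>
    have h2 := hp.mul (hasDerivAt_pi.1 h i)
    simp only [Derivation.leibniz, mkDerivation_X, map_mul, eval_X, smul_eq_mul, map_add]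
    refine h2.congr_deriv ?_
    ring

theorem ar_flow {n : ℕ} (I : Ideal (MvPolynomial (Fin n) ℝ)) (v : Fin n → MvPolynomial (Fin n) ℝ)
    (hv : ∀ P ∈ I, mkDerivation ℝ v P ∈ I) (x : Fin n → ℝ) (hx : x ∈ realPoints I) :
    ∃ γ : ℝ → Fin n → ℝ, ∃ ε > 0, γ 0 = x ∧ (∀ t ∈ Set.Icc 0 ε,
      HasDerivAt γ (fun i => eval (γ t) (v i)) t) ∧ ∀ t ∈ Set.Icc 0 ε, γ t ∈ realPoints I := by
  have hsm : ContDiff ℝ 1 (fun y : Fin n → ℝ => fun i => eval y (v i)) := by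
    refine contDiff_pi.2 fun i => ?_
    have h : ∀ P : MvPolynomial (Fin n) ℝ, ContDiff ℝ 1 (fun y : Fin n → ℝ => eval y P) := by
      intro P
      induction P using MvPolynomial.induction_on with
      | C a => simpa using contDiff_const
      | add p q hp hq => simpa using hp.add hq
      | mul_X p i hp => simpa using hp.mul (contDiff_apply ℝ ℝ i)
    exact h _
  obtain ⟨γ, h0, ε, hε, hγ⟩ :=
    (hsm.contDiffAt (x := x)).exists_forall_mem_closedBall_exists_eq_forall_mem_Ioo_hasDerivAt₀ 0
  simp only [zero_sub, zero_add] at hγ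
  have hd : ∀ t ∈ Set.Icc 0 (ε/2), HasDerivAt γ (fun i => eval (γ t) (v i)) t := by
    intro t ht
    exact hγ t ⟨by linarith [ht.1], by linarith [ht.2]⟩
  refine ⟨γ, ε/2, by linarith, h0, hd, ?_⟩
  obtain ⟨S, hS⟩ := (inferInstance : IsNoetherian (MvPolynomial (Fin n) ℝ) (MvPolynomial (Fin n) ℝ)).noetherian I
  have hSI : ∀ P ∈ S, P ∈ I := fun P hP => hS ▸ Submodule.subset_span hP
  -- coefficients
  have hc : ∀ P : S, ∃ c : S → MvPolynomial (Fin n) ℝ,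
      mkDerivation ℝ v P.1 = ∑ Q : S, c Q * Q.1 := by
    intro P
    have h1 := hv P.1 (hSI _ P.2)
    rw [← hS, Submodule.mem_span_finset] at h1
    obtain ⟨c, -, hc⟩ := h1
    refine ⟨fun Q => c Q.1, ?_⟩
    rw [← hc, ← Finset.sum_coe_sort S]
    rfl
  choose c hc using hc
  let E : ℝ → S → ℝ := fun t P => eval (γ t) P.1
  let E' : ℝ → S → ℝ := fun t P => eval (γ t) (mkDerivation ℝ v P.1)
  have hE : ∀ t ∈ Set.Icc 0 (ε/2), HasDerivAt E (E' t) t := by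
    intro t ht
    exact hasDerivAt_pi.2 fun P => ar_chain v γ t (hd t ht) P.1
  have hγc : ContinuousOn γ (Set.Icc 0 (ε/2)) := fun t ht => (hd t ht).continuousAt.continuousWithinAt
  have hbound : ∃ K : ℝ, 0 ≤ K ∧ ∀ t ∈ Set.Icc 0 (ε/2), ∀ P : S, ∑ Q : S, |eval (γ t) (c P Q)| ≤ K := by
    have hcont : ContinuousOn (fun t => ∑ P : S, ∑ Q : S, |eval (γ t) (c P Q)|) (Set.Icc 0 (ε/2)) := by
      refine continuousOn_finsetSum _ fun P _ => continuousOn_finsetSum _ fun Q _ => ?_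
      exact ((MvPolynomial.continuous_eval _).comp_continuousOn hγc).abs
    obtain ⟨K, hK⟩ := (isCompact_Icc.bddAbove_image hcont)
    refine ⟨K, ?_, ?_⟩
    · have h1 := hK (Set.mem_image_of_mem _ (show (0:ℝ) ∈ Set.Icc 0 (ε/2) from ⟨le_rfl, by linarith⟩))
      refine le_trans ?_ h1
      positivity
    · intro t ht P
      refine le_trans ?_ (hK (Set.mem_image_of_mem _ ht))
      exact Finset.single_le_sum (f := fun P : S => ∑ Q : S, |eval (γ t) (c P Q)|) (fun P _ => by positivity) (Finset.mem_univ P)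
  obtain ⟨K, hK0, hK⟩ := hbound
  have hzero := eq_zero_of_abs_deriv_le_mul_abs_self_of_eq_zero_right (f := E) (f' := E') (K := K)
    (a := 0) (b := ε/2) (fun t ht => (hE t ht).continuousAt.continuousWithinAt)
    (fun t ht => (hE t ⟨ht.1, ht.2.le⟩).hasDerivWithinAt)
    (by ext P; simpa [E, h0] using hx _ (hSI _ P.2))
    (by
      intro t ht
      rw [pi_norm_le_iff_of_nonneg (by positivity)]
      intro P
      have : E' t P = ∑ Q : S, eval (γ t) (c P Q) * E t Q := by
        simp only [E', hc P, map_sum, map_mul, E]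
      rw [this]
      calc ‖∑ Q : S, eval (γ t) (c P Q) * E t Q‖ ≤ ∑ Q : S, |eval (γ t) (c P Q)| * ‖E t‖ := by
            refine norm_sum_le_of_le _ fun Q _ => ?_
            rw [norm_mul, Real.norm_eq_abs]
            gcongr
            exact norm_le_pi_norm (E t) Q
        _ = (∑ Q : S, |eval (γ t) (c P Q)|) * ‖E t‖ := by rw [Finset.sum_mul]
        _ ≤ K * ‖E t‖ := by gcongr; exact hK t ⟨ht.1, ht.2.le⟩ P)
  intro t ht P hP
  have h1 : I ≤ RingHom.ker (eval (γ t)) := by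
    rw [← hS]
    refine Submodule.span_le.2 fun Q hQ => ?_
    exact congrFun (hzero t ht) ⟨Q, hQ⟩
  exact h1 hP

theorem ar_vf {n : ℕ} (I : Ideal (MvPolynomial (Fin n) ℝ)) [hI : I.IsPrime]
    (g r : MvPolynomial (Fin n) ℝ) (hg : Transcendental ℝ (Ideal.Quotient.mk I g))
    (hr : Transcendental (Algebra.adjoin ℝ {Ideal.Quotient.mk I g}) (Ideal.Quotient.mk I r)) :
    ∃ v : Fin n → MvPolynomial (Fin n) ℝ, (∀ P ∈ I, mkDerivation ℝ v P ∈ I) ∧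
      mkDerivation ℝ v r ∈ I ∧ mkDerivation ℝ v g ∉ I := by
  let A := MvPolynomial (Fin n) ℝ ⧸ I
  let K := FractionRing A
  have h1 : AlgebraicIndependent ℝ (fun _ : Unit => Ideal.Quotient.mk I g) :=
    (algebraicIndependent_singleton_iff ()).2 hg
  have h2 := (h1.option_iff_transcendental (Ideal.Quotient.mk I r)).2 (by
    rw [Set.range_const]; exact hr)
  have hinj : Function.Injective (IsScalarTower.toAlgHom ℝ A K) := IsFractionRing.injective A K
  have h3 := h2.map' hinj
  have hess : Algebra.EssFiniteType ℝ K :=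
    have : Algebra.EssFiniteType A K := Algebra.EssFiniteType.of_isLocalization K (nonZeroDivisors A)
    Algebra.EssFiniteType.comp ℝ A K
  obtain ⟨d, hd1, hd2⟩ := ar_der _ h3
  replace hd1 : d (algebraMap A K (Ideal.Quotient.mk I r)) = 0 := hd1
  replace hd2 : d (algebraMap A K (Ideal.Quotient.mk I g)) ≠ 0 := hd2
  obtain ⟨b, hb⟩ := IsLocalization.exist_integer_multiples_of_finite (nonZeroDivisors A)
    (fun i : Fin n => d (algebraMap A K (Ideal.Quotient.mk I (X i))))
  have hv : ∀ i, ∃ v : MvPolynomial (Fin n) ℝ, algebraMap A K (Ideal.Quotient.mk I v) =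
      (algebraMap A K b) * d (algebraMap A K (Ideal.Quotient.mk I (X i))) := by
    intro i
    obtain ⟨w, hw⟩ := hb i
    obtain ⟨v, rfl⟩ := Ideal.Quotient.mk_surjective w
    refine ⟨v, ?_⟩
    rw [hw]
    exact Algebra.smul_def _ _
  choose v hv using hv
  have key : ∀ P : MvPolynomial (Fin n) ℝ, algebraMap A K (Ideal.Quotient.mk I (mkDerivation ℝ v P)) =
      (algebraMap A K b) * d (algebraMap A K (Ideal.Quotient.mk I P)) := by
    intro P
    induction P using MvPolynomial.induction_on with
    | C a =>
      have : algebraMap A K (Ideal.Quotient.mk I (C a)) = algebraMap ℝ K a := rfl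
      rw [this]
      simp
    | add p q hp hq => simp only [map_add, hp, hq, mul_add]
    | mul_X p i hp =>
      simp only [Derivation.leibniz, mkDerivation_X, map_mul, smul_eq_mul, map_add, hp, hv]
      ring
  have hbne : algebraMap A K b ≠ 0 := by
    simpa using nonZeroDivisors.ne_zero b.2
  refine ⟨v, ?_, ?_, ?_⟩
  · intro P hP
    rw [← Ideal.Quotient.eq_zero_iff_mem] at hP ⊢
    apply hinj
    have := key P
    rw [hP] at this
    simpa using this
  · rw [← Ideal.Quotient.eq_zero_iff_mem]
    apply hinj
    have := key r
    rw [hd1] at this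
    simpa using this
  · rw [← Ideal.Quotient.eq_zero_iff_mem]
    intro h
    have := key g
    rw [h] at this
    simp only [map_zero] at this
    exact mul_ne_zero hbne hd2 this.symm

theorem ar_increase {n : ℕ} (I : Ideal (MvPolynomial (Fin n) ℝ)) (v : Fin n → MvPolynomial (Fin n) ℝ)
    (hv : ∀ P ∈ I, mkDerivation ℝ v P ∈ I) (g r : MvPolynomial (Fin n) ℝ)
    (hr : mkDerivation ℝ v r ∈ I) (x : Fin n → ℝ) (hx : x ∈ realPoints I)
    (hpos : 0 < eval x (mkDerivation ℝ v g)) :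
    ∃ y ∈ realPoints I, eval y r = eval x r ∧ eval x g < eval y g := by
  obtain ⟨γ, ε, hε, h0, hd, hZ⟩ := ar_flow I v hv x hx
  have hrc : ∀ t ∈ Set.Icc 0 ε, eval (γ t) r = eval (γ 0) r := by
    refine constant_of_has_deriv_right_zero (f := fun t => eval (γ t) r) ?_ ?_
    · intro t ht
      exact (ar_chain v γ t (hd t ht) r).continuousAt.continuousWithinAt
    · intro t ht
      have ht' : t ∈ Set.Icc 0 ε := ⟨ht.1, ht.2.le⟩
      have h1 := ar_chain v γ t (hd t ht') r
      rw [hZ t ht' _ hr] at h1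
      exact h1.hasDerivWithinAt
  have hg := ar_chain v γ 0 (hd 0 ⟨le_rfl, hε.le⟩) g
  have h1 : ∀ᶠ t in nhdsWithin (0:ℝ) (Set.Ioi 0), 0 < slope (fun s => eval (γ s) g) 0 t := by
    have h2 := hasDerivAt_iff_tendsto_slope.1 hg
    have h3 := h2.mono_left (nhdsWithin_mono (0:ℝ) (show Set.Ioi (0:ℝ) ⊆ {0}ᶜ from fun t ht => ne_of_gt ht))
    refine h3.eventually_const_lt ?_
    rw [h0]; exact hpos
  have h2 : ∀ᶠ t in nhdsWithin (0:ℝ) (Set.Ioi 0), t ∈ Set.Ioc 0 ε := Ioc_mem_nhdsGT hε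
  obtain ⟨t, ht1, ht2⟩ := (h1.and h2).exists
  have ht' : t ∈ Set.Icc 0 ε := ⟨ht2.1.le, ht2.2⟩
  refine ⟨γ t, hZ t ht', ?_, ?_⟩
  · rw [hrc t ht', h0]
  · rw [slope_def_field, sub_zero, h0] at ht1
    have := (div_pos_iff_of_pos_right ht2.1).1 ht1
    linarith

theorem ar_max {n : ℕ} (I : Ideal (MvPolynomial (Fin n) ℝ)) (v : Fin n → MvPolynomial (Fin n) ℝ)
    (hv : ∀ P ∈ I, mkDerivation ℝ v P ∈ I) (g r : MvPolynomial (Fin n) ℝ)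
    (hr : mkDerivation ℝ v r ∈ I) (a : Fin n → ℝ)
    (hr1 : ∀ x, ∀ i, (x i - a i) ^ 2 ≤ eval x r) (hr0 : eval a r = 0)
    (hacc : a ∈ closure (realPoints I ∩ {x | 0 < eval x g})) :
    a ∈ closure (realPoints I ∩ {x | 0 < eval x g} ∩ {x | eval x (mkDerivation ℝ v g) = 0}) := by
  rw [Metric.mem_closure_iff]
  intro δ hδ
  let S : Set (Fin n → ℝ) := realPoints I ∩ {x | 0 ≤ eval x g} ∩ {x | eval x r ≤ δ ^ 2 }
  have hS : IsCompact S := by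
    refine Metric.isCompact_of_isClosed_isBounded ?_ ?_
    · exact ((ar_isClosed_realPoints I).inter (isClosed_le continuous_const (MvPolynomial.continuous_eval g))).inter
        (isClosed_le (MvPolynomial.continuous_eval r) continuous_const)
    · refine (Metric.isBounded_closedBall (x := a) (r := δ)).subset fun x hx => ?_
      rw [Metric.mem_closedBall, dist_pi_le_iff hδ.le]
      intro i
      rw [Real.dist_eq]
      exact abs_le_of_sq_le_sq ((hr1 x i).trans hx.2) hδ.le
  have hcF : Continuous (fun x : Fin n → ℝ => eval x g * (δ ^ 2 - eval x r)) :=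
    (MvPolynomial.continuous_eval g).mul (continuous_const.sub (MvPolynomial.continuous_eval r))
  obtain ⟨x1, hx1, hx1Z, hx1g⟩ : ∃ x, eval x r < δ ^ 2 ∧ x ∈ realPoints I ∧ 0 < eval x g := by
    have ho : IsOpen {x : Fin n → ℝ | eval x r < δ ^ 2} := isOpen_lt (MvPolynomial.continuous_eval r) continuous_const
    obtain ⟨x, h1, h2, h3⟩ := mem_closure_iff.1 hacc _ ho (by simp [hr0]; positivity)
    exact ⟨x, h1, h2, h3⟩
  obtain ⟨x, hxS, hmax⟩ := hS.exists_isMaxOn ⟨x1, ⟨hx1Z, hx1g.le⟩, hx1.le⟩ hcF.continuousOn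
  have hF : 0 < eval x g * (δ ^ 2 - eval x r) := by
    refine lt_of_lt_of_le ?_ (hmax (show x1 ∈ S from ⟨⟨hx1Z, hx1g.le⟩, hx1.le⟩))
    exact mul_pos hx1g (by linarith)
  obtain ⟨⟨hxZ, hxg⟩, hxr⟩ := hxS
  simp only [Set.mem_setOf_eq] at hxg hxr
  have hg : 0 < eval x g := pos_of_mul_pos_left hF (by linarith)
  have hrx : 0 < δ ^ 2 - eval x r := pos_of_mul_pos_right hF hxg
  refine ⟨x, ⟨⟨hxZ, hg⟩, ?_⟩, ?_⟩
  · have hno : ∀ y ∈ realPoints I, eval y r = eval x r → ¬ eval x g < eval y g := by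
      intro y hy hyr hyg
      have := hmax (show y ∈ S from ⟨⟨hy, (hg.trans hyg).le⟩, by simp only [Set.mem_setOf_eq]; linarith⟩)
      simp only [Set.mem_setOf_eq] at this
      rw [hyr] at this
      exact absurd this (not_le.2 (mul_lt_mul_of_pos_right hyg hrx))
    by_contra hne
    rcases lt_or_gt_of_ne hne with h | h
    · have hneg : mkDerivation ℝ (fun i => - v i) = - mkDerivation ℝ v := by
        apply MvPolynomial.derivation_ext; intro i; simp
      obtain ⟨y, hy, h1, h2⟩ := ar_increase I (fun i => - v i) (fun P hP => by
        rw [hneg]; simpa using hv P hP) g r (by rw [hneg]; simpa using hr) x hxZ (by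
        rw [hneg]; simpa using h)
      exact hno y hy h1 h2
    · obtain ⟨y, hy, h1, h2⟩ := ar_increase I v hv g r hr x hxZ h
      exact hno y hy h1 h2
  · rw [dist_comm, dist_pi_lt_iff hδ]
    intro i
    rw [Real.dist_eq]
    exact abs_lt_of_sq_lt_sq ((hr1 x i).trans_lt (by linarith)) hδ.le

theorem ar_select {n : ℕ} (g : MvPolynomial (Fin n) ℝ) (a : Fin n → ℝ) (hga : eval a g ≤ 0)
    (hacc : a ∈ closure {x | 0 < eval x g}) :
    ∃ I : Ideal (MvPolynomial (Fin n) ℝ), I.IsPrime ∧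
      ringKrullDim (MvPolynomial (Fin n) ℝ ⧸ I) = 1 ∧ a ∈ realPoints I ∧
      a ∈ closure (realPoints I ∩ {x | 0 < eval x g}) := by
  let F : Set (Ideal (MvPolynomial (Fin n) ℝ)) :=
    {I | I.IsPrime ∧ a ∈ closure (realPoints I ∩ {x | 0 < eval x g})}
  have hF : F.Nonempty := by
    refine ⟨⊥, Ideal.isPrime_bot, ?_⟩
    have : realPoints (⊥ : Ideal (MvPolynomial (Fin n) ℝ)) = Set.univ := by
      ext x; simp [realPoints]
    rw [this, Set.univ_inter]; exact hacc
  obtain ⟨I, ⟨hI, hIa⟩, hmax⟩ := set_has_maximal_iff_noetherian.2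
    (inferInstance : IsNoetherian (MvPolynomial (Fin n) ℝ) (MvPolynomial (Fin n) ℝ)) F hF
  have haI : a ∈ realPoints I := by
    have := closure_mono (Set.inter_subset_left (s := realPoints I) (t := {x | 0 < eval x g})) hIa
    rwa [(ar_isClosed_realPoints I).closure_eq] at this
  have key : ∀ h : MvPolynomial (Fin n) ℝ, h ∉ I →
      a ∉ closure (realPoints I ∩ {x | 0 < eval x g} ∩ {x | eval x h = 0}) := by
    intro h hh hcl
    let J : Ideal (MvPolynomial (Fin n) ℝ) := I ⊔ Ideal.span {h}
    have hfin : J.minimalPrimes.Finite := Ideal.finite_minimalPrimes_of_isNoetherianRing _ J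
    have hsub : realPoints I ∩ {x | 0 < eval x g} ∩ {x | eval x h = 0} ⊆
        ⋃ p ∈ J.minimalPrimes, (realPoints p ∩ {x | 0 < eval x g}) := by
      rintro x ⟨⟨hx1, hx2⟩, hx3⟩
      have hJ : J ≤ RingHom.ker (eval x) := by
        refine sup_le (fun P hP => hx1 P hP) ?_
        rw [Ideal.span_le]
        rintro _ rfl
        exact hx3
      have : (RingHom.ker (eval x)).IsPrime := RingHom.ker_isPrime _
      obtain ⟨p, hp, hpx⟩ := Ideal.exists_minimalPrimes_le hJ
      simp only [Set.mem_iUnion]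
      exact ⟨p, hp, fun P hP => hpx hP, hx2⟩
    have := closure_mono hsub hcl
    rw [hfin.closure_biUnion] at this
    simp only [Set.mem_iUnion] at this
    obtain ⟨p, hp, hpa⟩ := this
    refine hmax p ⟨hp.1.1, hpa⟩ (lt_of_le_of_ne (le_sup_left.trans hp.1.2) ?_)
    rintro rfl
    exact hh ((le_sup_right.trans hp.1.2) (Ideal.subset_span rfl))
  have hgt : Transcendental ℝ (Ideal.Quotient.mk I g) := by
    rintro ⟨c, hc, hc0⟩
    have h1 : Polynomial.aeval g c ∈ I := by
      rw [← Ideal.Quotient.eq_zero_iff_mem, ← hc0]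
      exact (Polynomial.aeval_algHom_apply (Ideal.Quotient.mkₐ ℝ I) g c).symm
    have h2 : ∀ x ∈ realPoints I, c.IsRoot (eval x g) := by
      intro x hx
      have := hx _ h1
      have h3 := Polynomial.aeval_algHom_apply (MvPolynomial.aeval x : MvPolynomial (Fin n) ℝ →ₐ[ℝ] ℝ) g c
      have h4 : ∀ P : MvPolynomial (Fin n) ℝ, aeval x P = eval x P := fun P => by
        rw [MvPolynomial.aeval_eq_eval]
      rw [h4, h4, this] at h3
      simpa [Polynomial.IsRoot] using h3
    -- finite roots
    have hfin : {t | c.IsRoot t ∧ 0 < t}.Finite :=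
      (Polynomial.finite_setOfPred_isRoot hc).subset fun t ht => ht.1
    have hop : IsOpen ((fun x => eval x g) ⁻¹' {t | c.IsRoot t ∧ 0 < t}ᶜ) :=
      hfin.isClosed.isOpen_compl.preimage (MvPolynomial.continuous_eval g)
    obtain ⟨x, hx1, hx2, hx3⟩ := mem_closure_iff.1 hIa _ hop (by
      intro h; exact absurd h.2 (not_lt.2 hga))
    exact hx1 ⟨h2 x hx2, hx3⟩
  have halg : ∀ r : MvPolynomial (Fin n) ℝ, (∀ x, ∀ i, (x i - a i) ^ 2 ≤ eval x r) → eval a r = 0 →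
      IsAlgebraic (Algebra.adjoin ℝ {Ideal.Quotient.mk I g}) (Ideal.Quotient.mk I r) := by
    intro r hr1 hr0
    by_contra hr
    obtain ⟨v, hv, hvr, hvg⟩ := ar_vf I g r hgt hr
    exact key _ hvg (ar_max I v hv g r hvr a hr1 hr0 hIa)
  have hX : ∀ i, IsAlgebraic (Algebra.adjoin ℝ {Ideal.Quotient.mk I g}) (Ideal.Quotient.mk I (X i)) := by
    intro i
    have hs : ∀ x : Fin n → ℝ, ∀ j, (x j - a j) ^ 2 ≤ ∑ j, (x j - a j) ^ 2 := fun x j =>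
      Finset.single_le_sum (f := fun j => (x j - a j) ^ 2) (fun j _ => sq_nonneg _) (Finset.mem_univ j)
    have h1 := halg (∑ j, (X j - C (a j)) ^ 2) (by
      intro x j; simpa using hs x j) (by simp)
    have h2 := halg (∑ j, (X j - C (a j)) ^ 2 + (X i - C (a i)) ^ 2) (by
      intro x j
      have := hs x j
      have := sq_nonneg (x i - a i)
      simp; linarith) (by simp)
    have h3 := h2.sub h1
    rw [← map_sub, add_sub_cancel_left, map_pow] at h3
    have h4 := IsAlgebraic.of_pow (by norm_num) h3
    have h5 : IsAlgebraic (Algebra.adjoin ℝ {Ideal.Quotient.mk I g}) (Ideal.Quotient.mk I (C (a i))) := by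
      have : (Ideal.Quotient.mk I (C (a i))) = algebraMap (Algebra.adjoin ℝ {Ideal.Quotient.mk I g}) _ (algebraMap ℝ _ (a i)) := by
        rfl
      rw [this]
      exact isAlgebraic_algebraMap _
    have h6 := h4.add h5
    rwa [← map_add, sub_add_cancel] at h6
  refine ⟨I, hI, ar_dim _ hgt ?_, haI, hIa⟩
  intro x
  obtain ⟨P, rfl⟩ := Ideal.Quotient.mk_surjective x
  induction P using MvPolynomial.induction_on with
  | C r =>
    have : (Ideal.Quotient.mk I (C r)) = algebraMap (Algebra.adjoin ℝ {Ideal.Quotient.mk I g}) _ (algebraMap ℝ _ r) := rfl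
    rw [this]
    exact isAlgebraic_algebraMap _
  | add p q hp hq => rw [map_add]; exact hp.add hq
  | mul_X p i hp => rw [map_mul]; exact hp.mul (hX i)

def ArLine {n : ℕ} (U : Set (Fin n → ℝ)) (f : (Fin n → ℝ) → ℝ) : Prop :=
  ∀ x ∈ U, ∀ v : Fin n → ℝ, ∃ ε > 0,
    ContinuousOn (fun t : ℝ => f (x + t • v)) (Set.Ioo (-ε) ε) ∧
    ∃ p q : Polynomial ℝ, q ≠ 0 ∧ ∀ t ∈ Set.Ioo (-ε) ε, q.eval t * f (x + t • v) = p.eval t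

noncomputable def arPhi {n : ℕ} (a v : Fin n → ℝ) : MvPolynomial (Fin n) ℝ →ₐ[ℝ] Polynomial ℝ :=
  aeval (fun i => Polynomial.C (a i) + Polynomial.C (v i) * Polynomial.X)

theorem arPhi_eval {n : ℕ} (a v : Fin n → ℝ) (P : MvPolynomial (Fin n) ℝ) (t : ℝ) :
    (arPhi a v P).eval t = eval (a + t • v) P := by
  unfold arPhi
  induction P using MvPolynomial.induction_on with
  | C r => simp
  | add p q hp hq => simp [hp, hq]
  | mul_X p i hp => simp [hp]; left; ring

theorem ar_dens1 (J : Set ℝ) (hJ : IsOpen J) (h : ℝ → ℝ) (hh : ContinuousOn h J) (q : Polynomial ℝ)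
    (hq : q ≠ 0) (H : ∀ t ∈ J, q.eval t ≠ 0 → h t = 0) : ∀ t ∈ J, h t = 0 := by
  by_contra! hc
  obtain ⟨t, ht, ht0⟩ := hc
  have ho : IsOpen (J ∩ h ⁻¹' {0}ᶜ) := hh.isOpen_inter_preimage hJ isOpen_compl_singleton
  have hd : Dense {t | q.IsRoot t}ᶜ := (Set.Finite.countable (Polynomial.finite_setOfPred_isRoot hq)).dense_compl ℝ
  obtain ⟨s, hs1, hs2⟩ := hd.inter_open_nonempty _ ho ⟨t, ht, ht0⟩
  exact hs1.2 (H s hs1.1 hs2)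

theorem ar_line {n : ℕ} (U : Set (Fin n → ℝ)) (f : (Fin n → ℝ) → ℝ) (hf : ArcRational U f) :
    ArLine U f := by
  intro x hx v
  by_cases hv : v = 0
  · subst hv
    refine ⟨1, one_pos, ?_, Polynomial.C (f x), 1, one_ne_zero, fun t _ => by simp⟩
    simp only [smul_zero, add_zero]
    exact continuousOn_const
  obtain ⟨i, hi⟩ := Function.ne_iff.1 hv
  have hi : v i ≠ 0 := hi
  have hsurj : Function.Surjective (arPhi x v) := by
    intro p
    refine ⟨Polynomial.aeval (C (v i)⁻¹ * (X i - C (x i))) p, ?_⟩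
    rw [← Polynomial.aeval_algHom_apply]
    have : arPhi x v (C (v i)⁻¹ * (X i - C (x i))) = Polynomial.X := by
      simp only [arPhi, map_mul, map_sub, aeval_X, algHom_C]
      simp only [Polynomial.algebraMap_eq, add_sub_cancel_left]
      rw [← mul_assoc, ← Polynomial.C_mul, inv_mul_cancel₀ hi, Polynomial.C_1, one_mul]
    rw [this, Polynomial.aeval_X_left_apply]
  let I := RingHom.ker (arPhi x v)
  have hI : I.IsPrime := RingHom.ker_isPrime _
  have hdim : ringKrullDim (MvPolynomial (Fin n) ℝ ⧸ I) = 1 := by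
    rw [ringKrullDim_eq_of_ringEquiv (Ideal.quotientKerAlgEquivOfSurjective hsurj).toRingEquiv]
    rw [Polynomial.ringKrullDim_of_isNoetherianRing]
    simp
  have hmem : ∀ t : ℝ, x + t • v ∈ realPoints I := by
    intro t P hP
    rw [← arPhi_eval, show arPhi x v P = 0 from hP, Polynomial.eval_zero]
  obtain ⟨Ux, hUo, hxU, -, hc, p, q, hq, hpq⟩ := hf x hx I hI hdim (by simpa using hmem 0)
  have hcl : Continuous (fun t : ℝ => x + t • v) := by fun_prop
  have hnh : (fun t : ℝ => x + t • v) ⁻¹' Ux ∈ nhds (0:ℝ) :=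
    (hUo.preimage hcl).mem_nhds (by simpa using hxU)
  obtain ⟨ε, hε, hball⟩ := Metric.mem_nhds_iff.1 hnh
  rw [Real.ball_eq_Ioo, zero_sub, zero_add] at hball
  have hcont : ContinuousOn (fun t : ℝ => f (x + t • v)) (Set.Ioo (-ε) ε) :=
    hc.comp hcl.continuousOn fun t ht => ⟨hball ht, hmem t⟩
  have hq0 : arPhi x v q ≠ 0 := hq
  refine ⟨ε, hε, hcont, arPhi x v p, arPhi x v q, hq0, ?_⟩
  intro t ht
  rw [← sub_eq_zero]
  refine ar_dens1 (Set.Ioo (-ε) ε) isOpen_Ioo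
    (fun t => (arPhi x v q).eval t * f (x + t • v) - (arPhi x v p).eval t) ?_ _ hq0 ?_ t ht
  · exact ((Polynomial.continuous _).continuousOn.mul hcont).sub (Polynomial.continuous _).continuousOn
  · intro t ht h0
    have h0' := h0
    rw [arPhi_eval] at h0'
    have := hpq _ ⟨hball ht, hmem t⟩ h0'
    simp only [arPhi_eval, this]
    field_simp
    simp

theorem ar_open_zero {n : ℕ} (V : Set (Fin n → ℝ)) (hV : IsOpen V) (hne : V.Nonempty)
    (g : MvPolynomial (Fin n) ℝ) (h : ∀ x ∈ V, eval x g = 0) : g = 0 := by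
  obtain ⟨x, hx⟩ := hne
  obtain ⟨ε, hε, hb⟩ := Metric.isOpen_iff.1 hV x hx
  rw [ball_pi _ hε] at hb
  refine funext_set (fun i => Metric.ball (x i) ε) (fun i => ?_) fun y hy => ?_
  · rw [Real.ball_eq_Ioo]; exact Set.Ioo_infinite (by linarith)
  · rw [h y (hb hy), map_zero]

theorem ar_H2 {n : ℕ} (U : Set (Fin n → ℝ)) (f : (Fin n → ℝ) → ℝ) (hf : ArLine U f)
    (q P Q : MvPolynomial (Fin n) ℝ) (hq : q ≠ 0) (N : Set (Fin n → ℝ)) (hNU : N ⊆ U) (hN : IsOpen N)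
    (h : ∀ x ∈ N, eval x q ≠ 0 → eval x Q * f x = eval x P) :
    ∀ x ∈ N, eval x Q * f x = eval x P := by
  intro x hx
  obtain ⟨y, hy⟩ : ∃ y, eval y q ≠ 0 := by
    by_contra! hc
    exact hq (MvPolynomial.funext fun y => by rw [hc y, map_zero])
  obtain ⟨ε, hε, hcont, -⟩ := hf x (hNU hx) (y - x)
  have hcl : Continuous (fun t : ℝ => x + t • (y - x)) := by fun_prop
  have hq0 : arPhi x (y - x) q ≠ 0 := by
    intro h0
    have := arPhi_eval x (y - x) q 1
    rw [h0] at this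
    simp at this
    exact hy this.symm
  have := ar_dens1 (Set.Ioo (-ε) ε ∩ (fun t : ℝ => x + t • (y - x)) ⁻¹' N)
    (isOpen_Ioo.inter (hN.preimage hcl))
    (fun t => (arPhi x (y - x) Q).eval t * f (x + t • (y - x)) - (arPhi x (y - x) P).eval t) ?_ _ hq0 ?_ 0 ?_
  · simp only [arPhi_eval, zero_smul, add_zero] at this
    linarith
  · exact ((Polynomial.continuous _).continuousOn.mul (hcont.mono Set.inter_subset_left)).sub
      (Polynomial.continuous _).continuousOn
  · intro t ht h0
    rw [arPhi_eval] at h0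
    simp only [arPhi_eval, h _ ht.2 h0, sub_self]
  · exact ⟨⟨by linarith, hε⟩, by simpa using hx⟩

theorem ar_glob {X A : Type*} [TopologicalSpace X] [CommRing A] [IsDomain A] (ev : X → A →+* ℝ)
    (S : Set X) (hSp : IsPreconnected S) (hSne : S.Nonempty) (f : X → ℝ)
    (H1 : ∀ a : A, ∀ V : Set X, IsOpen V → V.Nonempty → (∀ x ∈ V, ev x a = 0) → a = 0)
    (H2 : ∀ q P Q : A, q ≠ 0 → ∀ V : Set X, V ⊆ S → IsOpen V →
      (∀ x ∈ V, ev x q ≠ 0 → ev x Q * f x = ev x P) → ∀ x ∈ V, ev x Q * f x = ev x P)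
    (loc : ∀ x ∈ S, ∃ V : Set X, IsOpen V ∧ x ∈ V ∧ V ⊆ S ∧ ∃ p q : A, q ≠ 0 ∧
      ∀ y ∈ V, ev y q * f y = ev y p) :
    ∃ P Q : A, Q ≠ 0 ∧ ∀ x ∈ S, ev x Q * f x = ev x P := by
  obtain ⟨x0, hx0⟩ := hSne
  obtain ⟨V0, hV0, hxV0, hV0S, P, Q, hQ, hPQ⟩ := loc x0 hx0
  refine ⟨P, Q, hQ, ?_⟩
  let T : Set X := {x | ∃ V : Set X, IsOpen V ∧ x ∈ V ∧ ∀ y ∈ V, ev y Q * f y = ev y P}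
  have hTo : IsOpen T := by
    rw [isOpen_iff_forall_mem_open]
    rintro x ⟨V, hV, hxV, h⟩
    exact ⟨V, fun y hy => ⟨V, hV, hy, h⟩, hV, hxV⟩
  have hsub : S ⊆ T := by
    refine hSp.subset_of_closure_inter_subset hTo ⟨x0, hx0, V0, hV0, hxV0, hPQ⟩ ?_
    rintro x ⟨hxc, hxS⟩
    obtain ⟨V, hV, hxV, hVS, p, q, hq, hpq⟩ := loc x hxS
    obtain ⟨z, hzV, W, hW, hzW, hWPQ⟩ := mem_closure_iff.1 hxc V hV hxV
    have heq : q * P - Q * p = 0 := by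
      refine H1 _ (V ∩ W) (hV.inter hW) ⟨z, hzV, hzW⟩ ?_
      rintro y ⟨hy1, hy2⟩
      rw [map_sub, map_mul, map_mul, ← hpq y hy1, ← hWPQ y hy2]; ring
    refine ⟨V, hV, hxV, H2 q P Q hq V hVS hV ?_⟩
    intro y hy hy0
    have h1 := hpq y hy
    have h2 : ev y q * ev y P = ev y Q * ev y p := by
      rw [← map_mul, ← map_mul, sub_eq_zero.1 heq]
    apply mul_left_cancel₀ hy0
    rw [h2, ← h1]; ring
  intro x hx
  obtain ⟨V, -, hxV, h⟩ := hsub hx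
  exact h x hxV

theorem ar_slice {k : ℕ} (B' : Set (Fin k → ℝ)) (B : Set (Fin (k+1) → ℝ)) (y : ℝ)
    (hB : ∀ x ∈ B', (Fin.cons y x : Fin (k+1) → ℝ) ∈ B) (f : (Fin (k+1) → ℝ) → ℝ) (hf : ArLine B f) :
    ArLine B' (fun x => f (Fin.cons y x)) := by
  intro x hx v
  have h := hf _ (hB x hx) (Fin.cons 0 v : Fin (k+1) → ℝ)
  have he : ∀ t : ℝ, (Fin.cons y x + t • (Fin.cons 0 v : Fin (k+1) → ℝ) : Fin (k+1) → ℝ)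
      = Fin.cons y (x + t • v) := by
    intro t; ext i; refine Fin.cases ?_ (fun j => ?_) i <;> simp
  simp only [he] at h
  exact h

theorem ar_vert {k : ℕ} (α β : ℝ) (hαβ : α < β) (x : Fin k → ℝ) (B : Set (Fin (k+1) → ℝ))
    (hB : ∀ y ∈ Set.Ioo α β, (Fin.cons y x : Fin (k+1) → ℝ) ∈ B) (f : (Fin (k+1) → ℝ) → ℝ)
    (hf : ArLine B f) :
    ContinuousOn (fun y : ℝ => f (Fin.cons y x)) (Set.Ioo α β) ∧
    ∃ p q : Polynomial ℝ, q ≠ 0 ∧ ∀ y ∈ Set.Ioo α β, q.eval y * f (Fin.cons y x) = p.eval y := by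
  have loc : ∀ y ∈ Set.Ioo α β, ∃ ε > 0,
      ContinuousOn (fun t : ℝ => f (Fin.cons (y + t) x)) (Set.Ioo (-ε) ε) ∧
      ∃ p q : Polynomial ℝ, q ≠ 0 ∧ ∀ t ∈ Set.Ioo (-ε) ε, q.eval t * f (Fin.cons (y + t) x) = p.eval t := by
    intro y hy
    have h := hf _ (hB y hy) (Fin.cons 1 0 : Fin (k+1) → ℝ)
    have he : ∀ t : ℝ, (Fin.cons y x + t • (Fin.cons 1 0 : Fin (k+1) → ℝ) : Fin (k+1) → ℝ)
        = Fin.cons (y + t) x := by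
      intro t; ext i; refine Fin.cases ?_ (fun j => ?_) i <;> simp
    simp only [he] at h
    exact h
  have hcont : ContinuousOn (fun y : ℝ => f (Fin.cons y x)) (Set.Ioo α β) := by
    intro y hy
    obtain ⟨ε, hε, hc, -⟩ := loc y hy
    have h1 : ContinuousAt (fun t : ℝ => f (Fin.cons (y + t) x)) (y - y) := by
      rw [sub_self]
      exact hc.continuousAt (Ioo_mem_nhds (by linarith) hε)
    have h2 : ContinuousAt (fun z : ℝ => z - y) y := by fun_prop
    have h3 := ContinuousAt.comp (f := fun z : ℝ => z - y) h1 h2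
    have h4 : ((fun t : ℝ => f (Fin.cons (y + t) x)) ∘ fun z : ℝ => z - y) = fun y : ℝ => f (Fin.cons y x) := by
      funext z; simp
    rw [h4] at h3
    exact h3.continuousWithinAt
  refine ⟨hcont, ?_⟩
  refine ar_glob (fun y : ℝ => Polynomial.evalRingHom y) (Set.Ioo α β) isPreconnected_Ioo
    (Set.nonempty_Ioo.2 hαβ) (fun y : ℝ => f (Fin.cons y x)) ?_ ?_ ?_
  · rintro a V hV ⟨y, hy⟩ h
    refine Polynomial.eq_zero_of_infinite_isRoot a ?_
    obtain ⟨ε, hε, hb⟩ := Metric.isOpen_iff.1 hV y hy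
    rw [Real.ball_eq_Ioo] at hb
    exact (Set.Ioo_infinite (show y - ε < y + ε by linarith)).mono fun z hz => h z (hb hz)
  · intro q P Q hq V hVS hV h y hy
    have := ar_dens1 V hV (fun y => Q.eval y * f (Fin.cons y x) - P.eval y)
      (((Polynomial.continuous _).continuousOn.mul (hcont.mono hVS)).sub
      (Polynomial.continuous _).continuousOn) q hq (fun t ht h0 => sub_eq_zero.2 (h t ht h0)) y hy
    exact sub_eq_zero.1 this
  · intro y hy
    obtain ⟨ε, hε, -, p, q, hq, hpq⟩ := loc y hy
    refine ⟨Set.Ioo (y - ε) (y + ε) ∩ Set.Ioo α β, isOpen_Ioo.inter isOpen_Ioo,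
      ⟨⟨by linarith, by linarith⟩, hy⟩, Set.inter_subset_right,
      p.comp (Polynomial.X - Polynomial.C y), q.comp (Polynomial.X - Polynomial.C y), ?_, ?_⟩
    · intro h0
      apply hq
      have := congrArg (fun r => r.comp (Polynomial.X + Polynomial.C y)) h0
      simpa [Polynomial.comp_assoc] using this
    · intro z hz
      have := hpq (z - y) ⟨by linarith [hz.1.1], by linarith [hz.1.2]⟩
      simpa using this

theorem ar_baire {k : ℕ} (B : Set (Fin k → ℝ)) (hB : IsOpen B) (hne : B.Nonempty)
    (A : ℕ → Set (Fin k → ℝ)) (hA : ∀ x ∈ B, ∃ d, x ∈ A d) :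
    ∃ d, ∀ g : MvPolynomial (Fin k) ℝ, (∀ x ∈ A d, eval x g = 0) → g = 0 := by
  by_contra! hc
  choose g hg hg0 using hc
  have hd : Dense (⋂ d, {x | eval x (g d) ≠ 0}) := by
    refine dense_iInter_of_isOpen (fun d => ?_) fun d => ?_
    · exact isOpen_ne_fun (MvPolynomial.continuous_eval _) continuous_const
    · rw [dense_iff_inter_open]
      intro V hV hVne
      by_contra hem
      refine hg0 d (ar_open_zero V hV hVne _ fun x hx => ?_)
      by_contra h0
      exact hem ⟨x, hx, h0⟩
  obtain ⟨x, hxB, hx⟩ := hd.inter_open_nonempty B hB hne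
  obtain ⟨d, hd⟩ := hA x hxB
  exact Set.mem_iInter.1 hx d (hg d x hd)

theorem ar_linsys {D : Type*} [CommRing D] [IsDomain D] (d : ℕ) (y : Fin (2*d+1) → D)
    (P Q : Fin (2*d+1) → D) : ∃ p q : Polynomial D, p.natDegree ≤ d ∧ q.natDegree ≤ d ∧
    (p ≠ 0 ∨ q ≠ 0) ∧ ∀ i, Q i * p.eval (y i) = P i * q.eval (y i) := by
  let M : Matrix (Fin (2*d+1)) (Fin (d+1) ⊕ Fin (d+1)) D := fun i j =>
    Sum.elim (fun j : Fin (d+1) => Q i * y i ^ (j:ℕ)) (fun j : Fin (d+1) => - (P i * y i ^ (j:ℕ))) j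
  have hni : ¬ Function.Injective M.mulVecLin := by
    intro h
    have := card_le_of_injective D M.mulVecLin h
    simp at this
    omega
  rw [← LinearMap.ker_eq_bot, Submodule.eq_bot_iff] at hni
  push Not at hni
  obtain ⟨u, hu, hu0⟩ := hni
  have hdeg : ∀ w : Fin (d+1) → D, (∑ j : Fin (d+1), Polynomial.monomial (j:ℕ) (w j)).natDegree ≤ d := by
    intro w
    refine Polynomial.natDegree_sum_le_of_forall_le _ _ fun j _ => ?_
    exact (Polynomial.natDegree_monomial_le _).trans (Nat.lt_succ_iff.1 j.2)
  have hcoe : ∀ w : Fin (d+1) → D, ∑ j : Fin (d+1), Polynomial.monomial (j:ℕ) (w j) = 0 → w = 0 := by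
    intro w hw
    funext j
    have := congrArg (fun r => Polynomial.coeff r (j:ℕ)) hw
    simpa [Polynomial.finsetSum_coeff, Polynomial.coeff_monomial, Fin.val_inj] using this
  refine ⟨∑ j : Fin (d+1), Polynomial.monomial (j:ℕ) (u (Sum.inl j)), ∑ j : Fin (d+1), Polynomial.monomial (j:ℕ) (u (Sum.inr j)),
    hdeg (fun j => u (Sum.inl j)), hdeg (fun j => u (Sum.inr j)), ?_, ?_⟩
  · by_contra! h
    apply hu0
    have h1 := hcoe (fun j => u (Sum.inl j)) h.1
    have h2 := hcoe (fun j => u (Sum.inr j)) h.2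
    funext j
    rcases j with j | j
    · exact congrFun h1 j
    · exact congrFun h2 j
  · intro i
    have h := congrFun (LinearMap.mem_ker.1 hu) i
    simp only [Matrix.mulVecLin_apply, Matrix.mulVec, dotProduct, Fintype.sum_sum_type,
      Pi.zero_apply] at h
    simp only [M, Sum.elim_inl, Sum.elim_inr] at h
    simp only [Polynomial.eval_finsetSum, Polynomial.eval_monomial, Finset.mul_sum]
    rw [← sub_eq_zero, ← h, ← Finset.sum_sub_distrib, ← Finset.sum_add_distrib]
    exact Finset.sum_congr rfl fun j _ => by ring

theorem ar_box (k : ℕ) : ∀ (α β : Fin k → ℝ), (∀ i, α i < β i) → ∀ f : (Fin k → ℝ) → ℝ,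
    ArLine (Set.pi Set.univ fun i => Set.Ioo (α i) (β i)) f →
    ∃ P Q : MvPolynomial (Fin k) ℝ, Q ≠ 0 ∧
      ∀ x ∈ Set.pi Set.univ (fun i => Set.Ioo (α i) (β i)), eval x Q * f x = eval x P := by
  induction k with
  | zero =>
    intro α β _ f _
    refine ⟨C (f 0), 1, one_ne_zero, fun x _ => ?_⟩
    rw [Subsingleton.elim x 0]; simp
  | succ k IH =>
    intro α β hαβ f hf
    set B := Set.pi Set.univ fun i => Set.Ioo (α i) (β i) with hB
    let B' : Set (Fin k → ℝ) := Set.pi Set.univ fun i => Set.Ioo (α i.succ) (β i.succ)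
    let J := Set.Ioo (α 0) (β 0)
    have hB'o : IsOpen B' := isOpen_set_pi Set.finite_univ fun i _ => isOpen_Ioo
    have hB'ne : B'.Nonempty := Set.univ_pi_nonempty_iff.2 fun i => Set.nonempty_Ioo.2 (hαβ _)
    have hBo : IsOpen B := isOpen_set_pi Set.finite_univ fun i _ => isOpen_Ioo
    have hBne : B.Nonempty := Set.univ_pi_nonempty_iff.2 fun i => Set.nonempty_Ioo.2 (hαβ _)
    have hcons : ∀ y ∈ J, ∀ x ∈ B', (Fin.cons y x : Fin (k+1) → ℝ) ∈ B := by
      intro y hy x hx i _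
      refine Fin.cases ?_ (fun j => ?_) i
      · exact hy
      · exact hx j trivial
    have hsl : ∀ y ∈ J, ArLine B' (fun x => f (Fin.cons y x)) := fun y hy =>
      ar_slice B' B y (hcons y hy) f hf
    have hIH : ∀ y : ℝ, ∃ P Q : MvPolynomial (Fin k) ℝ, y ∈ J → Q ≠ 0 ∧
        ∀ x ∈ B', eval x Q * f (Fin.cons y x) = eval x P := by
      intro y
      by_cases hy : y ∈ J
      · obtain ⟨P, Q, h1, h2⟩ := IH (fun i => α i.succ) (fun i => β i.succ) (fun i => hαβ _)
          (fun x => f (Fin.cons y x)) (hsl y hy)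
        exact ⟨P, Q, fun _ => ⟨h1, h2⟩⟩
      · exact ⟨0, 0, fun h => absurd h hy⟩
    choose P Q hPQ using hIH
    have hv := fun x (hx : x ∈ B') => ar_vert (α 0) (β 0) (hαβ 0) x B (fun y hy => hcons y hy x hx) f hf
    let A : ℕ → Set (Fin k → ℝ) := fun d => {x | x ∈ B' ∧ ∃ p q : Polynomial ℝ, q ≠ 0 ∧
      p.natDegree ≤ d ∧ q.natDegree ≤ d ∧ ∀ y ∈ J, q.eval y * f (Fin.cons y x) = p.eval y}
    obtain ⟨d, hd⟩ := ar_baire B' hB'o hB'ne A (by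
      intro x hx
      obtain ⟨-, p, q, hq, hpq⟩ := hv x hx
      exact ⟨max p.natDegree q.natDegree, hx, p, q, hq, le_max_left _ _, le_max_right _ _, hpq⟩)
    let em := (Set.Ioo_infinite (hαβ 0)).natEmbedding
    let y : Fin (2*d+1) → ℝ := fun i => em i
    have hyJ : ∀ i, y i ∈ J := fun i => (em i).2
    have hyinj : Function.Injective y := fun i j hij =>
      Fin.ext (em.injective (Subtype.ext hij))
    obtain ⟨p, q, hp, hq, hpq0, hpq⟩ := ar_linsys (D := MvPolynomial (Fin k) ℝ) d (fun i => C (y i))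
      (fun i => P (y i)) (fun i => Q (y i))
    let D := MvPolynomial (Fin k) ℝ
    have hmap : ∀ (r : Polynomial D) (x : Fin k → ℝ) (z : ℝ),
        (r.map (eval x)).eval z = eval x (r.eval (C z)) := by
      intro r x z
      rw [Polynomial.eval_map, Polynomial.eval, Polynomial.hom_eval₂]
      simp
    have hkey : ∀ x ∈ A d, (∀ i, eval x (Q (y i)) ≠ 0) → ∀ z ∈ J,
        (p.map (eval x)).eval z = (q.map (eval x)).eval z * f (Fin.cons z x) := by
      rintro x ⟨hx, p0, q0, hq0, hp0d, hq0d, h0⟩ hQ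
      have h1 : ∀ i, (p.map (eval x)).eval (y i) = (q.map (eval x)).eval (y i) * f (Fin.cons (y i) x) := by
        intro i
        have h2 := congrArg (eval x) (hpq i)
        rw [map_mul, map_mul, ← hmap, ← hmap, ← (hPQ (y i) (hyJ i)).2 x hx] at h2
        apply mul_left_cancel₀ (hQ i)
        rw [h2]; ring
      have h3 : q0 * p.map (eval x) - p0 * q.map (eval x) = 0 := by
        refine Polynomial.eq_zero_of_natDegree_lt_card_of_eval_eq_zero _ hyinj ?_ ?_
        · intro i
          rw [Polynomial.eval_sub, Polynomial.eval_mul, Polynomial.eval_mul, h1, ← h0 _ (hyJ i)]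
          ring
        · have e1 : (p.map (eval x)).natDegree ≤ d := Polynomial.natDegree_map_le.trans hp
          have e2 : (q.map (eval x)).natDegree ≤ d := Polynomial.natDegree_map_le.trans hq
          have e3 := Polynomial.natDegree_mul_le (p := q0) (q := p.map (eval x))
          have e4 := Polynomial.natDegree_mul_le (p := p0) (q := q.map (eval x))
          have e5 := Polynomial.natDegree_sub_le (q0 * p.map (eval x)) (p0 * q.map (eval x))
          have : max (q0 * p.map (eval x)).natDegree (p0 * q.map (eval x)).natDegree ≤ 2 * d :=
            max_le (by omega) (by omega)
          rw [Fintype.card_fin]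
          omega
      intro z hz
      have := ar_dens1 J isOpen_Ioo
        (fun z => (p.map (eval x)).eval z - (q.map (eval x)).eval z * f (Fin.cons z x))
        ((Polynomial.continuous _).continuousOn.sub ((Polynomial.continuous _).continuousOn.mul (hv x hx).1))
        q0 hq0 (by
          intro t ht ht0
          have h4 := congrArg (Polynomial.eval t) h3
          rw [Polynomial.eval_sub, Polynomial.eval_mul, Polynomial.eval_mul, ← h0 t ht,
            Polynomial.eval_zero] at h4
          apply mul_left_cancel₀ ht0
          linear_combination h4) z hz
      exact sub_eq_zero.1 this
    have hprod : ∏ i, Q (y i) ≠ 0 := Finset.prod_ne_zero_iff.2 fun i _ => (hPQ (y i) (hyJ i)).1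
    have hall : ∀ z ∈ J, ∀ x ∈ B', eval x (q.eval (C z)) * f (Fin.cons z x) = eval x (p.eval (C z)) := by
      intro z hz
      obtain ⟨hQz, hPQz⟩ := hPQ z hz
      have h1 : (p.eval (C z) * Q z - q.eval (C z) * P z) * ∏ i, Q (y i) = 0 := by
        apply hd
        intro x hx
        by_cases h0 : ∀ i, eval x (Q (y i)) ≠ 0
        · have h2 := hkey x hx h0 z hz
          rw [hmap, hmap] at h2
          rw [map_mul, map_sub, map_mul, map_mul, h2, ← hPQz x hx.1]
          ring
        · push Not at h0
          obtain ⟨i, hi⟩ := h0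
          rw [map_mul, map_prod, Finset.prod_eq_zero (Finset.mem_univ i) hi, mul_zero]
      have h2 := sub_eq_zero.1 ((mul_eq_zero.1 h1).resolve_right hprod)
      refine ar_H2 B' (fun x => f (Fin.cons z x)) (hsl z hz) (Q z) _ _ hQz B' le_rfl hB'o ?_
      intro x hx hx0
      have h3 := congrArg (eval x) h2
      rw [map_mul, map_mul, ← hPQz x hx] at h3
      apply mul_right_cancel₀ hx0
      rw [h3]; ring
    have hfin : ∀ (r : Polynomial D) (x : Fin (k+1) → ℝ), eval x ((finSuccEquiv ℝ k).symm r)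
        = eval (Fin.tail x) (r.eval (C (x 0))) := by
      intro r x
      conv_lhs => rw [← Fin.cons_self_tail x]
      rw [eval_eq_eval_mv_eval', AlgEquiv.apply_symm_apply, hmap]
    have hB2 : ∀ x ∈ B, eval x ((finSuccEquiv ℝ k).symm q) * f x = eval x ((finSuccEquiv ℝ k).symm p) := by
      intro x hx
      rw [hfin, hfin]
      have := hall (x 0) (hx 0 trivial) (Fin.tail x) (fun i _ => hx i.succ trivial)
      rwa [Fin.cons_self_tail] at this
    refine ⟨(finSuccEquiv ℝ k).symm p, (finSuccEquiv ℝ k).symm q, ?_, hB2⟩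
    intro h0
    have hq0 : q = 0 := by simpa using h0
    have hp0 : (finSuccEquiv ℝ k).symm p = 0 := by
      refine ar_open_zero B hBo hBne _ fun x hx => ?_
      rw [← hB2 x hx, h0, map_zero, zero_mul]
    have hp0 : p = 0 := by simpa using hp0
    rcases hpq0 with h | h
    · exact h hp0
    · exact h hq0

theorem ar_rational {n : ℕ} (U : Set (Fin n → ℝ)) (hU : IsOpen U) (hc : IsConnected U)
    (f : (Fin n → ℝ) → ℝ) (hf : ArLine U f) :
    ∃ P Q : MvPolynomial (Fin n) ℝ, Q ≠ 0 ∧ ∀ x ∈ U, eval x Q * f x = eval x P := by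
  refine ar_glob (fun x : Fin n → ℝ => (eval x : MvPolynomial (Fin n) ℝ →+* ℝ)) U hc.isPreconnected
    hc.nonempty f (fun a V hV hne h => ar_open_zero V hV hne a h)
    (fun q P Q hq V hVS hV h => ar_H2 U f hf q P Q hq V hVS hV h) ?_
  intro x hx
  obtain ⟨ε, hε, hb⟩ := Metric.isOpen_iff.1 hU x hx
  have hb' : Metric.ball x ε = Set.pi Set.univ fun i => Set.Ioo (x i - ε) (x i + ε) := by
    rw [ball_pi _ hε]; simp only [Real.ball_eq_Ioo]
  refine ⟨Metric.ball x ε, Metric.isOpen_ball, Metric.mem_ball_self hε, hb, ?_⟩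
  rw [hb'] at hb ⊢
  exact ar_box n _ _ (fun i => by linarith) f (fun x hx => hf x (hb hx))

theorem ar_coeff (m : ℕ) : ∀ (A : Polynomial ℝ) (ψ : ℝ → ℝ), ContinuousAt ψ 0 →
    (∀ᶠ t in nhdsWithin (0:ℝ) {0}ᶜ, A.eval t = t ^ m * ψ t) → A.coeff m = ψ 0 := by
  induction m with
  | zero =>
    intro A ψ hψ h
    have h1 : Filter.Tendsto (fun t => A.eval t) (nhdsWithin (0:ℝ) {0}ᶜ) (nhds (A.eval 0)) :=
      (A.continuous.tendsto 0).mono_left nhdsWithin_le_nhds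
    have h2 : Filter.Tendsto ψ (nhdsWithin (0:ℝ) {0}ᶜ) (nhds (ψ 0)) :=
      hψ.tendsto.mono_left nhdsWithin_le_nhds
    have h3 : (fun t => A.eval t) =ᶠ[nhdsWithin (0:ℝ) {0}ᶜ] ψ := by
      filter_upwards [h] with t ht
      simpa using ht
    rw [Polynomial.coeff_zero_eq_eval_zero]
    exact tendsto_nhds_unique (h1.congr' h3) h2
  | succ m IH =>
    intro A ψ hψ h
    have h1 : Filter.Tendsto (fun t => A.eval t) (nhdsWithin (0:ℝ) {0}ᶜ) (nhds (A.eval 0)) :=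
      (A.continuous.tendsto 0).mono_left nhdsWithin_le_nhds
    have h2 : Filter.Tendsto (fun t => t ^ (m+1) * ψ t) (nhdsWithin (0:ℝ) {0}ᶜ) (nhds (0 ^ (m+1) * ψ 0)) :=
      (((continuous_pow (m+1)).tendsto 0).mul hψ.tendsto).mono_left nhdsWithin_le_nhds
    have h0 : A.eval 0 = 0 := by
      have := tendsto_nhds_unique (h1.congr' h) h2
      simpa using this
    have hdiv := Polynomial.divX_mul_X_add A
    rw [Polynomial.coeff_zero_eq_eval_zero, h0, map_zero, add_zero] at hdiv
    rw [← Polynomial.coeff_divX]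
    refine IH A.divX ψ hψ ?_
    filter_upwards [h, self_mem_nhdsWithin] with t ht ht0
    rw [← hdiv, Polynomial.eval_mul, Polynomial.eval_X] at ht
    apply mul_right_cancel₀ (show t ≠ 0 from ht0)
    rw [ht]; ring

noncomputable def arPsi {n : ℕ} (v : Fin n → ℝ) :
    MvPolynomial (Fin n) ℝ →ₐ[ℝ] Polynomial (MvPolynomial (Fin n) ℝ) :=
  aeval (fun i => Polynomial.C (X i) + Polynomial.C (C (v i)) * Polynomial.X)

theorem arPsi_map {n : ℕ} (v z : Fin n → ℝ) (P : MvPolynomial (Fin n) ℝ) :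
    (arPsi v P).map (eval z) = arPhi z v P := by
  unfold arPsi arPhi
  induction P using MvPolynomial.induction_on with
  | C r =>
    rw [algHom_C, algHom_C, Polynomial.algebraMap_apply, Polynomial.map_C]
    simp [MvPolynomial.algebraMap_eq]
  | add p q hp hq => simp [hp, hq]
  | mul_X p i hp => simp [hp]

theorem ar_hered {n : ℕ} (U : Set (Fin n → ℝ)) (f : (Fin n → ℝ) → ℝ) (hU : IsOpen U)
    (hf : ArLine U f) (P Q : MvPolynomial (Fin n) ℝ) (hQ : Q ≠ 0)
    (hPQ : ∀ x ∈ U, eval x Q * f x = eval x P) (I : Ideal (MvPolynomial (Fin n) ℝ)) (hI : I.IsPrime) :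
    ∃ p' q' : MvPolynomial (Fin n) ℝ, q' ∉ I ∧
      ∀ x ∈ U ∩ realPoints I, eval x q' ≠ 0 → f x = eval x p' / eval x q' := by
  classical
  by_cases hne : (U ∩ realPoints I).Nonempty
  swap
  · refine ⟨0, 1, fun h => hI.ne_top ((Ideal.eq_top_iff_one I).2 h), fun x hx => absurd ⟨x, hx⟩ hne⟩
  obtain ⟨x, hxU, hxI⟩ := hne
  obtain ⟨y, hy⟩ : ∃ y, eval y Q ≠ 0 := by
    by_contra! hc
    exact hQ (MvPolynomial.funext fun y => by rw [hc y, map_zero])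
  set v := y - x with hv
  have hex : ∃ m, (arPsi v Q).coeff m ∉ I := by
    by_contra! hc
    have h1 : arPhi x v Q = 0 := by
      rw [← arPsi_map]
      ext m
      rw [Polynomial.coeff_map, hxI _ (hc m), Polynomial.coeff_zero]
    have h2 := arPhi_eval x v Q 1
    rw [h1, hv] at h2
    simp at h2
    exact hy h2.symm
  have hm := Nat.find_spec hex
  have hmin : ∀ i < Nat.find hex, (arPsi v Q).coeff i ∈ I := fun i hi => not_not.1 (Nat.find_min hex hi)
  set m := Nat.find hex
  refine ⟨(arPsi v P).coeff m, (arPsi v Q).coeff m, hm, ?_⟩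
  rintro z ⟨hzU, hzI⟩ hz0
  rw [eq_div_iff hz0]
  obtain ⟨S, hS⟩ : Polynomial.X ^ m ∣ arPhi z v Q := by
    rw [Polynomial.X_pow_dvd_iff]
    intro i hi
    rw [← arPsi_map, Polynomial.coeff_map]
    exact hzI _ (hmin i hi)
  have hS0 : S.eval 0 = eval z ((arPsi v Q).coeff m) := by
    rw [← Polynomial.coeff_map, arPsi_map, hS, ← Polynomial.coeff_zero_eq_eval_zero]
    simpa using (Polynomial.coeff_X_pow_mul S m 0).symm
  obtain ⟨ε, hε, hcont, -⟩ := hf z hzU v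
  have hc0 : ContinuousAt (fun t : ℝ => f (z + t • v)) 0 :=
    hcont.continuousAt (Ioo_mem_nhds (by linarith) hε)
  have hcl : Continuous (fun t : ℝ => z + t • v) := by fun_prop
  have := ar_coeff m (arPhi z v P) (fun t => S.eval t * f (z + t • v))
    (S.continuous.continuousAt.mul hc0) (by
      refine Filter.Eventually.filter_mono nhdsWithin_le_nhds ?_
      have hnh : (fun t : ℝ => z + t • v) ⁻¹' U ∈ nhds (0:ℝ) :=
        (hU.preimage hcl).mem_nhds (by simpa using hzU)
      filter_upwards [hnh] with t ht
      rw [arPhi_eval, ← hPQ _ ht, ← arPhi_eval, hS]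
      simp; ring)
  rw [← Polynomial.coeff_map, ← Polynomial.coeff_map, arPsi_map, arPsi_map] at *
  simp only [zero_smul, add_zero] at this
  rw [this, hS0, mul_comm]

theorem ar_cont {n : ℕ} (U : Set (Fin n → ℝ)) (f : (Fin n → ℝ) → ℝ) (hU : IsOpen U)
    (har : ArcRational U f) (hf : ArLine U f) (P Q : MvPolynomial (Fin n) ℝ) (hQ : Q ≠ 0)
    (hPQ : ∀ x ∈ U, eval x Q * f x = eval x P) : ContinuousOn f U := by
  intro a ha
  apply ContinuousAt.continuousWithinAt
  by_contra hnc
  rw [Metric.continuousAt_iff] at hnc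
  push Not at hnc
  obtain ⟨ε, hε, hbad⟩ := hnc
  set c := f a with hc
  set e := ε / 2 with he
  have hepos : 0 < e := by positivity
  let g : MvPolynomial (Fin n) ℝ := (P - C c * Q) ^ 2 - C (e ^ 2) * Q ^ 2
  have hg : ∀ x ∈ U, eval x g = (eval x Q) ^ 2 * ((f x - c) ^ 2 - e ^ 2) := by
    intro x hx
    simp only [g, map_sub, map_pow, map_mul, eval_C, ← hPQ x hx]
    ring
  have hga : eval a g ≤ 0 := by
    rw [hg a ha, ← hc]
    have := mul_nonneg (sq_nonneg (eval a Q)) (sq_nonneg e)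
    nlinarith
  have hacc : a ∈ closure {x | 0 < eval x g} := by
    rw [mem_closure_iff]
    intro o ho hao
    by_contra hem
    obtain ⟨δ, hδ, hb⟩ := Metric.isOpen_iff.1 (ho.inter hU) a ⟨hao, ha⟩
    obtain ⟨x, hxa, hfx⟩ := hbad δ hδ
    have hxN := hb (Metric.mem_ball.2 hxa)
    obtain ⟨y, hy⟩ : ∃ y, eval y Q ≠ 0 := by
      by_contra! hc
      exact hQ (MvPolynomial.funext fun y => by rw [hc y, map_zero])
    obtain ⟨η, hη, hcont, -⟩ := hf x hxN.2 (y - x)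
    have hcl : Continuous (fun t : ℝ => x + t • (y - x)) := by fun_prop
    have hq0 : arPhi x (y - x) Q ≠ 0 := by
      intro h0
      have := arPhi_eval x (y - x) Q 1
      rw [h0] at this
      simp at this
      exact hy this.symm
    have := ar_dens1 (Set.Ioo (-η) η ∩ (fun t : ℝ => x + t • (y - x)) ⁻¹' (o ∩ U))
      (isOpen_Ioo.inter ((ho.inter hU).preimage hcl))
      (fun t => max (|f (x + t • (y - x)) - c| - e) 0) ?_ _ hq0 ?_ 0 ?_
    · simp only [zero_smul, add_zero] at this
      have h1 := max_eq_right_iff.1 this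
      rw [Real.dist_eq] at hfx
      linarith
    · exact ((((hcont.mono Set.inter_subset_left).sub continuousOn_const).abs).sub
        continuousOn_const).sup continuousOn_const
    · intro t ht h0
      rw [arPhi_eval] at h0
      have h1 : eval (x + t • (y - x)) g ≤ 0 := by
        by_contra h2
        exact hem ⟨_, ht.2.1, not_le.1 h2⟩
      rw [hg _ ht.2.2] at h1
      have h2 : 0 < (eval (x + t • (y - x)) Q) ^ 2 := by positivity
      have h3 : (f (x + t • (y - x)) - c) ^ 2 ≤ e ^ 2 := by
        by_contra h4
        have := mul_pos h2 (sub_pos.2 (not_le.1 h4))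
        linarith
      have h5 := abs_le_of_sq_le_sq h3 hepos.le
      exact max_eq_right (by rw [sub_nonpos]; exact h5)
    · exact ⟨⟨by linarith, hη⟩, by simpa using hxN⟩
  obtain ⟨I, hI, hdim, haI, hIa⟩ := ar_select g a hga hacc
  obtain ⟨Ux, hUo, haU, hUU, hcon, -⟩ := har a ha I hI hdim haI
  obtain ⟨δ, hδ, h1⟩ := Metric.continuousWithinAt_iff.1 (hcon a ⟨haU, haI⟩) e hepos
  obtain ⟨y, ⟨hyU, hyb⟩, hyI, hyg⟩ := mem_closure_iff.1 hIa (Ux ∩ Metric.ball a δ)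
    (hUo.inter Metric.isOpen_ball) ⟨haU, Metric.mem_ball_self hδ⟩
  have h2 := h1 ⟨hyU, hyI⟩ hyb
  rw [Real.dist_eq] at h2
  have h3 : (f y - c) ^ 2 < e ^ 2 := sq_lt_sq' (by linarith [(abs_lt.1 h2).1]) (abs_lt.1 h2).2
  have h4 : 0 < eval y g := hyg
  rw [hg y (hUU hyU)] at h4
  have := mul_nonneg (sq_nonneg (eval y Q)) (sub_pos.2 h3).le
  nlinarith

/-- **Theorem 1.10** for open subsets of `ℝⁿ`. An arc-rational function on a nonempty
connected open set `U ⊆ ℝⁿ` is continuous, rational, and hereditarily rational along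
every irreducible real algebraic curve. -/
theorem arcRational_is_continuous_hereditarily_rational
    (n : ℕ) (U : Set (Fin n → ℝ)) (hU : IsOpen U) (hne : U.Nonempty)
    (hconn : IsConnected U) (f : (Fin n → ℝ) → ℝ) (hf : ArcRational U f) :
    ContinuousOn f U ∧
    (∃ p q : MvPolynomial (Fin n) ℝ, q ≠ 0 ∧
      ∀ x ∈ U, eval x q ≠ 0 → f x = eval x p / eval x q) ∧
    (∀ I : Ideal (MvPolynomial (Fin n) ℝ), I.IsPrime →
      ringKrullDim (MvPolynomial (Fin n) ℝ ⧸ I) = 1 →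
      ∃ p' q' : MvPolynomial (Fin n) ℝ, q' ∉ I ∧
        ∀ x ∈ U ∩ realPoints I, eval x q' ≠ 0 → f x = eval x p' / eval x q') := by
  have hl := ar_line U f hf
  obtain ⟨P, Q, hQ, hPQ⟩ := ar_rational U hU hconn f hl
  refine ⟨ar_cont U f hU hf hl P Q hQ hPQ, ⟨P, Q, hQ, fun x hx h0 => ?_⟩,
    fun I hI _ => ar_hered U f hU hl P Q hQ hPQ I hI⟩
  rw [eq_div_iff h0, mul_comm]
  exact hPQ x hx
end
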